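/- Let K be an algebraically closed field with char K ≠ 2, let H be a pointed Hopf algebra of discrete corepresentation type over K whose link-indecomposable component containing 1 has Ext-quiver Q^{m,n}, with distinct grouplikes a, b admitting nontrivial skew primitives in P(1,a) and P(1,b). Then one can choose nontrivial skew primitives x ∈ P(1,a), y ∈ P(1,b) and a scalar λ ∈ K× such that: ax + xa = 0, by + yb = 0, bx + λ⁻¹xb = 0, ay + λya = 0, x² ∈ P(1,a²), y² ∈ P(1,b²), and xy + λyx ∈ P(1,ab). -/

import Mathlib

open TensorProduct



section Basic

variable (K : Type) [CommRing K] (H : Type) [AddCommGroup H] [Module K H] [Coalgebra K H]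

/-- A grouplike element of a coalgebra. -/
def IsGrouplike (g : H) : Prop :=
  Coalgebra.counit (R := K) g = 1 ∧ Coalgebra.comul (R := K) g = g ⊗ₜ[K] g

/-- The space `P(g,h)` of `(g,h)`-skew primitive elements. -/
noncomputable def skewPrim (g h : H) : Submodule K H :=
  LinearMap.ker (Coalgebra.comul (R := K) (A := H)
    - (TensorProduct.mk K H H g + (TensorProduct.mk K H H).flip h))

lemma mem_skewPrim {g h x : H} :
    x ∈ skewPrim K H g h ↔ Coalgebra.comul (R := K) x = g ⊗ₜ[K] x + x ⊗ₜ[K] h := by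
  rw [skewPrim, LinearMap.mem_ker, LinearMap.sub_apply, sub_eq_zero, LinearMap.add_apply]
  rfl

/-- A submodule which is a subcoalgebra. -/
def IsSubcoalgebra (D : Submodule K H) : Prop :=
  ∀ x ∈ D, Coalgebra.comul (R := K) x ∈ LinearMap.range (TensorProduct.map D.subtype D.subtype)

/-- A coalgebra is pointed if every simple subcoalgebra is one-dimensional. -/
def IsPointedCoalgebra : Prop :=
  ∀ D : Submodule K H, IsSubcoalgebra K H D → D ≠ ⊥ →
    (∀ D' : Submodule K H, IsSubcoalgebra K H D' → D' ≤ D → D' = ⊥ ∨ D' = D) →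
    Module.finrank K ↥D = 1

end Basic

section Comodules

variable (K : Type) [CommRing K] (H : Type) [AddCommGroup H] [Module K H] [Coalgebra K H]

/-- A (finite or infinite dimensional) right `H`-comodule. -/
structure Comod where
  carrier : Type
  [acg : AddCommGroup carrier]
  [mod : Module K carrier]
  ρ : carrier →ₗ[K] carrier ⊗[K] H
  counit_comp : ∀ m : carrier,
    (TensorProduct.rid K carrier)
      ((LinearMap.lTensor carrier (Coalgebra.counit (R := K) (A := H))) (ρ m)) = m
  coassoc : ∀ m : carrier,
    (LinearMap.lTensor carrier (Coalgebra.comul (R := K) (A := H))) (ρ m)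
      = (TensorProduct.assoc K carrier H H) ((LinearMap.rTensor H ρ) (ρ m))

attribute [instance] Comod.acg Comod.mod

/-- A morphism of right `H`-comodules. -/
structure ComodHom (M N : Comod K H) where
  toLin : M.carrier →ₗ[K] N.carrier
  compat : ∀ m : M.carrier, N.ρ (toLin m) = (LinearMap.rTensor H toLin) (M.ρ m)

/-- Isomorphism of comodules. -/
def ComodIso (M N : Comod K H) : Prop :=
  ∃ f : ComodHom K H M N, Function.Bijective f.toLin

/-- An indecomposable comodule: it is nonzero, and (equivalently to the usual definition,
since idempotents split in comodule categories) every idempotent endomorphism is `0` or `1`. -/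
def Comod.Indec (M : Comod K H) : Prop :=
  (∃ m : M.carrier, m ≠ 0) ∧
    ∀ f : ComodHom K H M M, f.toLin ∘ₗ f.toLin = f.toLin →
      f.toLin = 0 ∨ f.toLin = LinearMap.id

/-- A submodule of a comodule which is a subcomodule. -/
def IsSubcomod (M : Comod K H) (N : Submodule K M.carrier) : Prop :=
  ∀ m ∈ N, M.ρ m ∈ LinearMap.range (LinearMap.rTensor H N.subtype)

/-- The coaction of `M` factors through the subcoalgebra `D`, i.e. `M` is a `D`-comodule. -/
def CoactsThrough (M : Comod K H) (D : Submodule K H) : Prop :=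
  ∀ m : M.carrier, M.ρ m ∈ LinearMap.range (LinearMap.lTensor M.carrier D.subtype)

/-- `M` has dimension vector `d` : it admits a composition series whose successive quotients
are the one-dimensional comodules associated to grouplike elements, where for every `h` the
grouplike `h` occurs exactly `d h` times. -/
def HasDimVector (M : Comod K H) (d : H → ℕ) : Prop :=
  ∃ (k : ℕ) (F : Fin (k+1) → Submodule K M.carrier) (g : Fin k → H),
    F 0 = ⊥ ∧ F (Fin.last k) = ⊤ ∧
    (∀ i : Fin k, F i.castSucc ≤ F i.succ) ∧
    (∀ i : Fin (k+1), IsSubcomod K H M (F i)) ∧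
    (∀ i : Fin k, IsGrouplike K H (g i)) ∧
    (∀ i : Fin k, ∃ m : M.carrier, m ∈ F i.succ ∧ m ∉ F i.castSucc ∧
        F i.succ = F i.castSucc ⊔ Submodule.span K {m}) ∧
    (∀ i : Fin k, ∀ m ∈ F i.succ,
        M.ρ m - m ⊗ₜ[K] (g i) ∈ LinearMap.range (LinearMap.rTensor H (F i.castSucc).subtype)) ∧
    (∀ h : H, d h = Nat.card {i : Fin k // g i = h})

/-- A pointed coalgebra is of discrete corepresentation type if for every dimension vector `d`
there are only finitely many isomorphism classes of indecomposable comodules with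
dimension vector `d`. -/
def DiscreteCorepType : Prop :=
  ∀ d : H → ℕ, ∃ (N : ℕ) (R : Fin N → Comod K H),
    ∀ M : Comod K H, M.Indec K H → HasDimVector K H M d → ∃ i, ComodIso K H M (R i)

/-- A subcoalgebra `D ≤ H` is of finite corepresentation type: there are only finitely many
isomorphism classes of finite-dimensional indecomposable comodules whose coaction factors
through `D`. -/
def FinCorepTypeOn (D : Submodule K H) : Prop :=
  ∃ (N : ℕ) (R : Fin N → Comod K H),
    ∀ M : Comod K H, M.Indec K H → Module.Finite K M.carrier → CoactsThrough K H M D →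
      ∃ i, ComodIso K H M (R i)

/-- A coalgebra is of finite corepresentation type. -/
def FinCorepType : Prop := FinCorepTypeOn K H ⊤

end Comodules

open scoped Classical

section Pointed

variable (K : Type) [CommRing K] (H : Type) [Ring H] [Bialgebra K H]

/-- `g` is a grouplike element belonging to the subcoalgebra `B`. -/
def grouplikeIn (B : Submodule K H) (g : H) : Prop := IsGrouplike K H g ∧ g ∈ B

/-- In the Ext-quiver of the subcoalgebra `B`, there are exactly `c` arrows from the
grouplike `g` to the grouplike `h` : since the trivial skew primitive `g - h` is nonzero
precisely when `g ≠ h`, this says `dim (P(g,h) ⊓ B) = c + 1` for `g ≠ h`, and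
`dim (P(g,g) ⊓ B) = c` for loops. -/
def arrowsEq (B : Submodule K H) (g h : H) (c : ℕ) : Prop :=
  Module.rank K ↥(skewPrim K H g h ⊓ B) = if g = h then (c : Cardinal) else (c : Cardinal) + 1

/-- The number of arrows from `g` to `h` in the Ext-quiver, as a cardinal: the dimension of
the space of skew primitives modulo the trivial ones. -/
noncomputable def ntRank (g h : H) : Cardinal :=
  Module.rank K
    (↥(skewPrim K H g h) ⧸
      Submodule.comap (skewPrim K H g h).subtype (Submodule.span K {g - h}))

/-- Two grouplikes are linked in `D` if there is a nontrivial skew primitive (in either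
direction) between them lying in `D`. -/
def LinkedIn (D : Submodule K H) (g h : H) : Prop :=
  ∃ x ∈ D, (x ∈ skewPrim K H g h ∨ x ∈ skewPrim K H h g) ∧ x ∉ Submodule.span K {g - h}

/-- The Ext-quiver of the subcoalgebra `D` is connected. -/
def ConnectedOn (D : Submodule K H) : Prop :=
  ∀ g h : H, IsGrouplike K H g → g ∈ D → IsGrouplike K H h → h ∈ D →
    Relation.ReflTransGen (LinkedIn K H D) g h

/-- `B` is the link-indecomposable component containing `1` : a subcoalgebra containing `1`,
maximal with respect to its Ext-quiver being connected. -/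
structure IsLIC1 (B : Submodule K H) : Prop where
  subcoalg : IsSubcoalgebra K H B
  one_mem : (1 : H) ∈ B
  connected : ConnectedOn K H B
  maximal : ∀ B' : Submodule K H, IsSubcoalgebra K H B' → ConnectedOn K H B' →
    B ≤ B' → B' = B

end Pointed

/-- `a^i * a'^(-i)`, i.e. the `i`-th power (for `i : ℤ`) of `a` when `a'` is a two-sided
inverse of `a`. -/
def zp {B : Type} [Monoid B] (a a' : B) (i : ℤ) : B := a ^ i.toNat * a' ^ (-i).toNat

section Hopf

variable (K : Type) [CommRing K] (H : Type) [Ring H] [HopfAlgebra K H]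

/-- The antipode applied to an element; for a grouplike `g` this is its inverse `g⁻¹`. -/
noncomputable def inv' (g : H) : H := HopfAlgebra.antipode (R := K) g

/-- The Ext-quiver of the subcoalgebra `B` is the (possibly folded) grid quiver `Q^{m,n}` :
the grouplikes of `B` form the group `⟨a, b | ab = ba, aᵐ = bⁿ⟩`, and at each vertex `g`
there is exactly one arrow `g → g·a` and one arrow `g → g·b`, and no other arrows. -/
def GridQuiverOn (B : Submodule K H) (a b : H) (m n : ℤ) : Prop :=
  grouplikeIn K H B a ∧ grouplikeIn K H B b ∧ a * b = b * a ∧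
  a * inv' K H a = 1 ∧ inv' K H a * a = 1 ∧ b * inv' K H b = 1 ∧ inv' K H b * b = 1 ∧
  (∀ i j : ℤ, zp a (inv' K H a) i * zp b (inv' K H b) j = 1 ↔
      ∃ l : ℤ, i = l * m ∧ j = -(l * n)) ∧
  (∀ g : H, grouplikeIn K H B g ↔
      ∃ i j : ℤ, g = zp a (inv' K H a) i * zp b (inv' K H b) j) ∧
  (∀ g h : H, grouplikeIn K H B g → grouplikeIn K H B h →
      arrowsEq K H B g h (if h = g * a ∨ h = g * b then 1 else 0))

/-- The Ext-quiver of `B` is a single vertex, and `G(B) = {1}`. -/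
def SingleVertexQuiver (B : Submodule K H) : Prop :=
  (∀ g : H, grouplikeIn K H B g ↔ g = 1) ∧ arrowsEq K H B 1 1 0

/-- The Ext-quiver of `B` is a complete oriented cycle, and `G(B) = ⟨a | aⁿ = 1⟩`. -/
def CycleQuiver (B : Submodule K H) : Prop :=
  ∃ (a : H) (nn : ℕ), 0 < nn ∧ grouplikeIn K H B a ∧ a ^ nn = 1 ∧
    (∀ kk : ℕ, 0 < kk → kk < nn → a ^ kk ≠ 1) ∧
    (∀ g : H, grouplikeIn K H B g ↔ ∃ i : ℕ, g = a ^ i) ∧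
    (∀ g h : H, grouplikeIn K H B g → grouplikeIn K H B h →
      arrowsEq K H B g h (if h = g * a then 1 else 0))

/-- The Ext-quiver of `B` is the doubly infinite linear quiver `··· → · → · → ···`, and
`G(B) = ⟨a⟩` is infinite cyclic. -/
def LineQuiver (B : Submodule K H) : Prop :=
  ∃ a : H, grouplikeIn K H B a ∧ (∀ kk : ℕ, 0 < kk → a ^ kk ≠ 1) ∧
    (∀ g : H, grouplikeIn K H B g ↔ ∃ i j : ℕ, a ^ i * g = a ^ j) ∧
    (∀ g h : H, grouplikeIn K H B g → grouplikeIn K H B h →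
      arrowsEq K H B g h (if h = g * a then 1 else 0))

end Hopf


set_option linter.unusedSectionVars false

structure GD (K : Type) [Field K] (k : ℕ) where
  μ : Fin k → ℕ
  ν : Fin k → ℕ
  X : (Fin k → K) →ₗ[K] (Fin k → K)
  Y : (Fin k → K) →ₗ[K] (Fin k → K)
  c : K
  homX : ∀ m j, (∀ l, μ l = μ j + 1 → ν l = ν j → m l = 0) → X m j = 0
  homY : ∀ m j, (∀ l, μ l = μ j → ν l = ν j + 1 → m l = 0) → Y m j = 0
  lowX : ∀ m j, (∀ l, j < l → m l = 0) → X m j = 0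
  lowY : ∀ m j, (∀ l, j < l → m l = 0) → Y m j = 0
  rel : ∀ m, Y (X m) = c • X (Y m)
  yy : ∀ m, Y (Y m) = 0
  xxx : ∀ m, X (X (X m)) = 0
  xxy : ∀ m, X (X (Y m)) = 0

section Constr

variable {K : Type} [Field K] {H : Type} [Ring H] [HopfAlgebra K H] {k : ℕ}

/-- the map e_i ↦ e_i ⊗ g_i h -/
noncomputable def Dh (g : Fin k → H) (h : H) : (Fin k → K) →ₗ[K] (Fin k → K) ⊗[K] H :=
  ∑ i, (TensorProduct.mk K (Fin k → K) H).flip (g i * h) ∘ₗ LinearMap.single K (fun _ => K) i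
    ∘ₗ LinearMap.proj i

lemma Dh_apply (g : Fin k → H) (h : H) (m : Fin k → K) :
    Dh g h m = ∑ i, (Pi.single i (m i) : Fin k → K) ⊗ₜ[K] (g i * h) := by
  simp [Dh]

noncomputable def D2 (g : Fin k → H) (t : H ⊗[K] H) :
    (Fin k → K) →ₗ[K] (Fin k → K) ⊗[K] (H ⊗[K] H) :=
  ∑ i, (TensorProduct.mk K (Fin k → K) (H ⊗[K] H)).flip ((g i ⊗ₜ[K] g i) * t)
    ∘ₗ LinearMap.single K (fun _ => K) i ∘ₗ LinearMap.proj i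

lemma D2_apply (g : Fin k → H) (t : H ⊗[K] H) (m : Fin k → K) :
    D2 g t m = ∑ i, (Pi.single i (m i) : Fin k → K) ⊗ₜ[K] ((g i ⊗ₜ[K] g i) * t) := by
  simp [D2]

lemma D2_add (g : Fin k → H) (t s : H ⊗[K] H) (m : Fin k → K) :
    D2 g (t + s) m = D2 g t m + D2 g s m := by
  simp [D2_apply, mul_add, TensorProduct.tmul_add, Finset.sum_add_distrib]

lemma D2_smul (g : Fin k → H) (r : K) (t : H ⊗[K] H) (m : Fin k → K) :
    D2 g (r • t) m = r • D2 g t m := by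
  simp [D2_apply, Finset.smul_sum]

lemma lT_Dh (g : Fin k → H) (hg : ∀ i, IsGrouplike K H (g i)) (h : H) (m : Fin k → K) :
    LinearMap.lTensor (Fin k → K) (Coalgebra.comul (R := K) (A := H)) (Dh g h m)
      = D2 g (Coalgebra.comul (R := K) h) m := by
  rw [Dh_apply, D2_apply, map_sum]
  refine Finset.sum_congr rfl fun i _ => ?_
  rw [LinearMap.lTensor_tmul, Bialgebra.comul_mul, (hg i).2]

lemma cu_Dh (g : Fin k → H) (hg : ∀ i, IsGrouplike K H (g i)) (h : H) (m : Fin k → K) :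
    (TensorProduct.rid K (Fin k → K))
      ((LinearMap.lTensor (Fin k → K) (Coalgebra.counit (R := K) (A := H))) (Dh g h m))
      = Coalgebra.counit (R := K) h • m := by
  rw [Dh_apply, map_sum, map_sum]
  have : m = ∑ i, (Pi.single i (m i) : Fin k → K) := (Finset.univ_sum_single m).symm
  conv_rhs => rw [this]
  rw [Finset.smul_sum]
  refine Finset.sum_congr rfl fun i _ => ?_
  rw [LinearMap.lTensor_tmul, Bialgebra.counit_mul, (hg i).1, TensorProduct.rid_tmul, one_mul]

/-- homogeneity -/
def HomOp (g : Fin k → H) (X : (Fin k → K) →ₗ[K] (Fin k → K)) (a : H) : Prop :=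
  ∀ i j, X (Pi.single i 1) j ≠ 0 → g j * a = g i

lemma HomOp.comp {g : Fin k → H} {X Y : (Fin k → K) →ₗ[K] (Fin k → K)} {a b : H}
    (hX : HomOp g X a) (hY : HomOp g Y b) : HomOp g (X ∘ₗ Y) (a * b) := by
  intro i j h
  have h1 : X (Y (Pi.single i 1)) = ∑ l, (Y (Pi.single i 1) l) • X (Pi.single l 1) := by
    conv_lhs => rw [← Finset.univ_sum_single (Y (Pi.single i 1)), map_sum]
    refine Finset.sum_congr rfl fun l _ => ?_
    rw [← map_smul, ← Pi.single_smul]; simp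
  rw [LinearMap.comp_apply, h1, Finset.sum_apply] at h
  obtain ⟨l, _, hl⟩ := Finset.exists_ne_zero_of_sum_ne_zero h
  rw [Pi.smul_apply, smul_eq_mul] at hl
  rw [← mul_assoc, hX l j (right_ne_zero_of_mul hl), hY i l (left_ne_zero_of_mul hl)]

lemma assoc_Dh (g : Fin k → H) (O : (Fin k → K) →ₗ[K] (Fin k → K)) (d w h : H)
    (hO : HomOp g O d) (n : Fin k → K) :
    (TensorProduct.assoc K (Fin k → K) H H)
      ((LinearMap.rTensor H (Dh g w ∘ₗ O)) (Dh g h n)) = D2 g (w ⊗ₜ[K] (d * h)) (O n) := by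
  have key : ∀ i, (TensorProduct.assoc K (Fin k → K) H H)
      ((Dh g w (O (Pi.single i 1))) ⊗ₜ[K] (g i * h)) =
        D2 g (w ⊗ₜ[K] (d * h)) (O (Pi.single i 1)) := by
    intro i
    rw [Dh_apply, D2_apply, TensorProduct.sum_tmul, map_sum]
    refine Finset.sum_congr rfl fun j _ => ?_
    by_cases hj : O (Pi.single i 1) j = 0
    · rw [hj, Pi.single_zero, TensorProduct.zero_tmul, TensorProduct.zero_tmul,
        LinearEquiv.map_zero, TensorProduct.zero_tmul]
    · rw [← hO i j hj]; simp [mul_assoc]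
  rw [Dh_apply, map_sum, map_sum]
  conv_rhs => rw [← Finset.univ_sum_single n, map_sum, map_sum]
  refine Finset.sum_congr rfl fun i _ => ?_
  have e : (Pi.single i (n i) : Fin k → K) = n i • Pi.single i 1 := by
    rw [← Pi.single_smul]; simp
  rw [LinearMap.rTensor_tmul, e, LinearMap.comp_apply, map_smul, map_smul, map_smul,
    ← TensorProduct.smul_tmul', map_smul, key]

/-- the grouplike degrees -/
def GD.g (G : GD K k) (a b : H) : Fin k → H := fun i => a ^ G.μ i * b ^ G.ν i

lemma GD.homOpX (G : GD K k) {a b : H} (hab : a * b = b * a) : HomOp (G.g a b) G.X a := by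
  intro i j h
  by_contra hne
  apply h
  apply G.homX
  intro l h1 h2
  rw [Pi.single_apply, if_neg]
  rintro rfl
  apply hne
  have : Commute a b := hab
  simp only [GD.g, h1, h2]
  rw [pow_succ, mul_assoc, mul_assoc, (this.pow_right _).eq]

lemma GD.homOpY (G : GD K k) {a b : H} : HomOp (G.g a b) G.Y b := by
  intro i j h
  by_contra hne
  apply h
  apply G.homY
  intro l h1 h2
  rw [Pi.single_apply, if_neg]
  rintro rfl
  apply hne
  simp only [GD.g, h1, h2]
  rw [pow_succ, mul_assoc]

lemma glk_iff {g : H} : IsGrouplike K H g ↔ IsGroupLikeElem K g :=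
  ⟨fun h => ⟨h.1, h.2⟩, fun h => ⟨h.1, h.2⟩⟩

lemma GD.gl (G : GD K k) {a b : H} (ha : IsGrouplike K H a) (hb : IsGrouplike K H b) (i) :
    IsGrouplike K H (G.g a b i) := by
  rw [glk_iff] at *
  exact ha.pow.mul hb.pow

noncomputable def GD.rho (G : GD K k) (a b x y w1 w3 : H) :
    (Fin k → K) →ₗ[K] (Fin k → K) ⊗[K] H :=
  Dh (G.g a b) 1 ∘ₗ LinearMap.id + Dh (G.g a b) x ∘ₗ G.X + Dh (G.g a b) y ∘ₗ G.Y
    + Dh (G.g a b) w1 ∘ₗ (G.X ∘ₗ G.X) + Dh (G.g a b) w3 ∘ₗ (G.X ∘ₗ G.Y)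

/-- hypotheses on the elements of `H` -/
structure HypH (K : Type) [Field K] {H : Type} [Ring H] [HopfAlgebra K H]
    (G : GD K k) (a b x y w1 w3 : H) : Prop where
  ha : IsGrouplike K H a
  hb : IsGrouplike K H b
  hab : a * b = b * a
  hx : Coalgebra.comul (R := K) x = 1 ⊗ₜ[K] x + x ⊗ₜ[K] a
  hy : Coalgebra.comul (R := K) y = 1 ⊗ₜ[K] y + y ⊗ₜ[K] b
  hw3 : Coalgebra.comul (R := K) w3 = 1 ⊗ₜ[K] w3 + x ⊗ₜ[K] (a * y) + G.c • (y ⊗ₜ[K] (b * x))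
    + w3 ⊗ₜ[K] (a * b)
  hw1 : (w1 = 0 ∧ ∀ m, G.X (G.X m) = 0) ∨
    Coalgebra.comul (R := K) w1 = 1 ⊗ₜ[K] w1 + x ⊗ₜ[K] (a * x) + w1 ⊗ₜ[K] (a * a)


end Constr

set_option linter.unusedSectionVars false

section Constr2

variable {K : Type} [Field K] {H : Type} [Ring H] [HopfAlgebra K H] {k : ℕ}

lemma HypH.counit_x {G : GD K k} {a b x y w1 w3 : H} (h : HypH K G a b x y w1 w3) :
    Coalgebra.counit (R := K) x = 0 := by
  have e := Coalgebra.rTensor_counit_comul (R := K) x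
  rw [h.hx] at e
  simp only [map_add, LinearMap.rTensor_tmul, Bialgebra.counit_one] at e
  have e2 := congrArg (fun t => Coalgebra.counit (R := K) (TensorProduct.lid K H t)) e
  simpa [h.ha.1] using e2

lemma HypH.counit_y {G : GD K k} {a b x y w1 w3 : H} (h : HypH K G a b x y w1 w3) :
    Coalgebra.counit (R := K) y = 0 := by
  have e := Coalgebra.rTensor_counit_comul (R := K) y
  rw [h.hy] at e
  simp only [map_add, LinearMap.rTensor_tmul, Bialgebra.counit_one] at e
  have e2 := congrArg (fun t => Coalgebra.counit (R := K) (TensorProduct.lid K H t)) e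
  simpa [h.hb.1] using e2

lemma HypH.counit_w3 {G : GD K k} {a b x y w1 w3 : H} (h : HypH K G a b x y w1 w3) :
    Coalgebra.counit (R := K) w3 = 0 := by
  have e := Coalgebra.rTensor_counit_comul (R := K) w3
  rw [h.hw3] at e
  simp only [map_add, LinearMap.rTensor_tmul, Bialgebra.counit_one, map_smul] at e
  have e2 := congrArg (fun t => Coalgebra.counit (R := K) (TensorProduct.lid K H t)) e
  simpa [h.hb.1, h.ha.1, h.counit_x, h.counit_y] using e2

lemma HypH.counit_w1 {G : GD K k} {a b x y w1 w3 : H} (h : HypH K G a b x y w1 w3) :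
    Coalgebra.counit (R := K) w1 = 0 := by
  rcases h.hw1 with ⟨h1, _⟩ | h1
  · rw [h1, map_zero]
  have e := Coalgebra.rTensor_counit_comul (R := K) w1
  rw [h1] at e
  simp only [map_add, LinearMap.rTensor_tmul, Bialgebra.counit_one, map_smul] at e
  have e2 := congrArg (fun t => Coalgebra.counit (R := K) (TensorProduct.lid K H t)) e
  simpa [h.hb.1, h.ha.1, h.counit_x, h.counit_y] using e2

lemma GD.rho_apply (G : GD K k) (a b x y w1 w3 : H) (m) : G.rho a b x y w1 w3 m =
  Dh (G.g a b) 1 m + Dh (G.g a b) x (G.X m) + Dh (G.g a b) y (G.Y m)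
    + Dh (G.g a b) w1 (G.X (G.X m)) + Dh (G.g a b) w3 (G.X (G.Y m)) := rfl

lemma homOp_id (g : Fin k → H) : HomOp (K := K) g LinearMap.id 1 := by
  intro i j h
  rw [LinearMap.id_apply, Pi.single_apply] at h
  have : j = i := by by_contra hne; exact h (if_neg hne)
  rw [this, mul_one]

lemma HypH.assoc {G : GD K k} {a b x y w1 w3 : H} (h : HypH K G a b x y w1 w3) (s : H) (n) :
    (TensorProduct.assoc K (Fin k → K) H H)
      ((LinearMap.rTensor H (G.rho a b x y w1 w3)) (Dh (G.g a b) s n)) =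
    D2 (G.g a b) (1 ⊗ₜ[K] s) n + D2 (G.g a b) (x ⊗ₜ[K] (a * s)) (G.X n)
      + D2 (G.g a b) (y ⊗ₜ[K] (b * s)) (G.Y n)
      + D2 (G.g a b) (w1 ⊗ₜ[K] (a * a * s)) (G.X (G.X n))
      + D2 (G.g a b) (w3 ⊗ₜ[K] (a * b * s)) (G.X (G.Y n)) := by
  rw [GD.rho]
  simp only [LinearMap.rTensor_add, LinearMap.add_apply, map_add]
  have hX := G.homOpX h.hab
  have hY := G.homOpY (a := a) (b := b)
  rw [assoc_Dh _ _ _ _ _ (homOp_id _), assoc_Dh _ _ _ _ _ hX, assoc_Dh _ _ _ _ _ hY,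
    assoc_Dh _ _ _ _ _ (hX.comp hX), assoc_Dh _ _ _ _ _ (hX.comp hY)]
  simp

noncomputable def HypH.comod {G : GD K k} {a b x y w1 w3 : H} (h : HypH K G a b x y w1 w3) :
    Comod K H where
  carrier := Fin k → K
  ρ := G.rho a b x y w1 w3
  counit_comp m := by
    rw [GD.rho_apply]
    simp only [map_add]
    rw [cu_Dh _ (G.gl h.ha h.hb), cu_Dh _ (G.gl h.ha h.hb), cu_Dh _ (G.gl h.ha h.hb),
      cu_Dh _ (G.gl h.ha h.hb), cu_Dh _ (G.gl h.ha h.hb), h.counit_x, h.counit_y, h.counit_w1,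
      h.counit_w3]
    simp
  coassoc m := by
    have gl := G.gl (a := a) (b := b) h.ha h.hb
    have r1 : G.X (G.Y (G.X m)) = 0 := by rw [G.rel, map_smul, G.xxy, smul_zero]
    have r2 : G.Y (G.X (G.X m)) = 0 := by rw [G.rel, r1, smul_zero]
    have r3 : G.Y (G.X (G.Y m)) = 0 := by rw [G.rel, G.yy, map_zero, smul_zero]
    conv_rhs => rw [GD.rho_apply]
    conv_lhs => rw [GD.rho_apply]
    simp only [map_add, h.assoc]
    simp only [lT_Dh _ gl, Bialgebra.comul_one, G.xxx, G.xxy, G.yy, map_zero, r1, r2, r3, add_zero,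
      h.hx, h.hy, h.hw3, D2_add, D2_smul, G.rel m, map_smul, mul_one, Algebra.TensorProduct.one_def]
    rcases h.hw1 with ⟨h1, h2⟩ | h1
    · simp only [h2, map_zero]
      abel
    · simp only [h1, D2_add]
      abel

lemma Dh_range (g : Fin k → H) (s : H) (n : Fin k → K) (F : Submodule K (Fin k → K))
    (hF : ∀ j, (Pi.single j (n j) : Fin k → K) ∈ F) :
    Dh g s n ∈ LinearMap.range (LinearMap.rTensor H F.subtype) := by
  rw [Dh_apply]
  refine Submodule.sum_mem _ fun j _ => ⟨(⟨_, hF j⟩ : F) ⊗ₜ[K] (g j * s), ?_⟩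
  simp

/-- flag -/
def flagF (K : Type) [Field K] (k : ℕ) (i : ℕ) : Submodule K (Fin k → K) where
  carrier := {v | ∀ j : Fin k, i ≤ j.val → v j = 0}
  add_mem' := by
    intro v w hv hw j hj
    simp [hv j hj, hw j hj]
  zero_mem' := by intro j _; rfl
  smul_mem' := by
    intro r v hv j hj
    simp [hv j hj]

lemma mem_flagF {i : ℕ} {v : Fin k → K} : v ∈ flagF K k i ↔ ∀ j : Fin k, i ≤ j.val → v j = 0 :=
  Iff.rfl

lemma single_mem_flagF {i : ℕ} {v : Fin k → K} (hv : v ∈ flagF K k i) (j : Fin k) :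
    (Pi.single j (v j) : Fin k → K) ∈ flagF K k i := by
  intro l hl
  by_cases h : l = j
  · subst h; simp [hv l hl]
  · simp [h]

lemma GD.X_flag (G : GD K k) {i : ℕ} {v : Fin k → K} (hv : v ∈ flagF K k (i+1)) :
    G.X v ∈ flagF K k i := by
  intro j hj
  apply G.lowX
  intro l hl
  apply hv
  have : j.val < l.val := hl
  omega

lemma GD.Y_flag (G : GD K k) {i : ℕ} {v : Fin k → K} (hv : v ∈ flagF K k (i+1)) :
    G.Y v ∈ flagF K k i := by
  intro j hj
  apply G.lowY
  intro l hl
  apply hv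
  have : j.val < l.val := hl
  omega

lemma flag_mono {i j : ℕ} (h : i ≤ j) : flagF K k i ≤ flagF K k j := by
  intro v hv l hl
  exact hv l (h.trans hl)

lemma GD.tail (G : GD K k) (a b x y w1 w3 : H) {i : ℕ} {m : Fin k → K}
    (hm : m ∈ flagF K k (i+1)) :
    Dh (G.g a b) x (G.X m) + Dh (G.g a b) y (G.Y m)
    + Dh (G.g a b) w1 (G.X (G.X m)) + Dh (G.g a b) w3 (G.X (G.Y m)) ∈
      LinearMap.range (LinearMap.rTensor H (flagF K k i).subtype) := by
  have h1 := G.X_flag hm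
  have h2 := G.Y_flag hm
  have h3 := G.X_flag (flag_mono (Nat.le_succ i) h1)
  have h4 := G.X_flag (flag_mono (Nat.le_succ i) h2)
  exact Submodule.add_mem _ (Submodule.add_mem _ (Submodule.add_mem _
    (Dh_range _ _ _ _ (single_mem_flagF h1)) (Dh_range _ _ _ _ (single_mem_flagF h2)))
    (Dh_range _ _ _ _ (single_mem_flagF h3))) (Dh_range _ _ _ _ (single_mem_flagF h4))

lemma GD.sub_flag (G : GD K k) (a b x y w1 w3 : H) (i : ℕ) (m : Fin k → K)
    (hm : m ∈ flagF K k i) : G.rho a b x y w1 w3 m ∈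
      LinearMap.range (LinearMap.rTensor H (flagF K k i).subtype) := by
  rw [GD.rho_apply, add_assoc, add_assoc, add_assoc, ← add_assoc (Dh _ y _),
    ← add_assoc (Dh _ x _), ← add_assoc (Dh _ x _)]
  exact Submodule.add_mem _ (Dh_range _ _ _ _ (single_mem_flagF hm))
    (G.tail _ _ _ _ _ _ (flag_mono (Nat.le_succ _) hm))

lemma gen_flag (i : Fin k) : ∃ m : Fin k → K, m ∈ flagF K k (i.val + 1) ∧ m ∉ flagF K k i.val ∧
    flagF K k (i.val + 1) = flagF K k i.val ⊔ Submodule.span K {m} := by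
  refine ⟨(Pi.single i 1 : Fin k → K), ?_, ?_, ?_⟩
  · intro j hj
    have : j ≠ i := by rintro rfl; simp at hj
    exact Pi.single_eq_of_ne this _
  · intro hh
    have := hh i (by simp)
    simp at this
  · apply le_antisymm
    · intro m hm
      rw [Submodule.mem_sup]
      refine ⟨m - m i • (Pi.single i 1 : Fin k → K), ?_, m i • (Pi.single i 1 : Fin k → K),
        Submodule.smul_mem _ _ (Submodule.mem_span_singleton_self _), sub_add_cancel _ _⟩
      intro j hj
      by_cases hji : j = i
      · subst hji; simp
      · have : i.val ≠ j.val := fun e => hji (Fin.ext e.symm)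
        have h2 : m j = 0 := hm j (by omega)
        simp [hji, h2]
    · refine sup_le (flag_mono (Nat.le_succ _)) ?_
      rw [Submodule.span_singleton_le_iff_mem]
      intro j hj
      have : j ≠ i := by rintro rfl; simp at hj
      exact Pi.single_eq_of_ne this _

lemma GD.quot_flag (G : GD K k) (a b x y w1 w3 : H) (i : Fin k) (m : Fin k → K)
    (hm : m ∈ flagF K k (i.val + 1)) : G.rho a b x y w1 w3 m - m ⊗ₜ[K] (G.g a b i) ∈
      LinearMap.range (LinearMap.rTensor H (flagF K k i.val).subtype) := by
  have ht := G.tail a b x y w1 w3 hm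
  rw [GD.rho_apply, add_assoc, add_assoc, add_assoc, ← add_assoc (Dh _ y _),
    ← add_assoc (Dh _ x _), ← add_assoc (Dh _ x _), add_sub_right_comm]
  refine Submodule.add_mem _ ?_ ht
  have e : Dh (G.g a b) 1 m - m ⊗ₜ[K] G.g a b i =
      ∑ j, (Pi.single j (m j) : Fin k → K) ⊗ₜ[K] (G.g a b j - G.g a b i) := by
    conv_lhs => rw [Dh_apply]; arg 2; rw [← Finset.univ_sum_single m]
    rw [TensorProduct.sum_tmul, ← Finset.sum_sub_distrib]
    refine Finset.sum_congr rfl fun j _ => ?_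
    rw [mul_one, TensorProduct.tmul_sub]
  rw [e]
  refine Submodule.sum_mem _ fun j _ => ?_
  by_cases hji : j = i
  · subst hji; rw [sub_self, TensorProduct.tmul_zero]; exact Submodule.zero_mem _
  · have hs : (Pi.single j (m j) : Fin k → K) ∈ flagF K k i.val := by
      intro l hl
      by_cases hlj : l = j
      · subst hlj
        have : i.val ≠ l.val := fun e => hji (Fin.ext e.symm)
        have h2 : m l = 0 := hm l (by omega)
        simp [h2]
      · simp [hlj]
    exact ⟨(⟨_, hs⟩ : flagF K k i.val) ⊗ₜ[K] (G.g a b j - G.g a b i), by simp⟩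

lemma flag_zero : flagF K k 0 = ⊥ := by
  refine (Submodule.eq_bot_iff _).2 fun v hv => ?_
  funext j
  exact hv j (Nat.zero_le _)

lemma flag_top : flagF K k k = ⊤ := by
  refine Submodule.eq_top_iff'.2 fun v j hj => ?_
  omega

lemma HypH.dimVec {G : GD K k} {a b x y w1 w3 : H} (h : HypH K G a b x y w1 w3) :
    HasDimVector K H h.comod (fun s => Nat.card {i : Fin k // G.g a b i = s}) :=
  ⟨k, fun i => flagF K k i.val, G.g a b, flag_zero, flag_top,
    fun _ => flag_mono (K := K) (k := k) (Nat.le_succ _),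
    fun i m hm => G.sub_flag a b x y w1 w3 i.val m hm, G.gl h.ha h.hb,
    fun i => gen_flag i, fun i m hm => G.quot_flag a b x y w1 w3 i m hm, fun _ => rfl⟩

/-- operator from a functional -/
noncomputable def fop (f : H →ₗ[K] K) (M : Comod K H) : M.carrier →ₗ[K] M.carrier :=
  (TensorProduct.rid K M.carrier).toLinearMap ∘ₗ LinearMap.lTensor M.carrier f ∘ₗ M.ρ

lemma fop_comm (f : H →ₗ[K] K) {M N : Comod K H} (φ : ComodHom K H M N) (m : M.carrier) :
    φ.toLin (fop f M m) = fop f N (φ.toLin m) := by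
  simp only [fop, LinearMap.comp_apply, φ.compat]
  generalize M.ρ m = t
  induction t using TensorProduct.induction_on with
  | zero => simp
  | tmul u v => simp
  | add s t hs ht => simp only [map_add, hs, ht]

lemma fop_Dh (g : Fin k → H) (h : H) (f : H →ₗ[K] K) (m : Fin k → K) :
    (TensorProduct.rid K (Fin k → K)) (LinearMap.lTensor (Fin k → K) f (Dh g h m)) =
      fun i => f (g i * h) * m i := by
  rw [Dh_apply, map_sum, map_sum]
  rw [← Finset.univ_sum_single (fun i => f (g i * h) * m i)]
  refine Finset.sum_congr rfl fun i _ => ?_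
  rw [LinearMap.lTensor_tmul, TensorProduct.rid_tmul, ← Pi.single_smul, smul_eq_mul]

lemma HypH.fop {G : GD K k} {a b x y w1 w3 : H} (h : HypH K G a b x y w1 w3) (f : H →ₗ[K] K)
    (m : Fin k → K) : fop f h.comod m = fun i =>
      f (G.g a b i) * m i + f (G.g a b i * x) * G.X m i + f (G.g a b i * y) * G.Y m i
      + f (G.g a b i * w1) * G.X (G.X m) i + f (G.g a b i * w3) * G.X (G.Y m) i := by
  change (TensorProduct.rid K (Fin k → K))
    (LinearMap.lTensor (Fin k → K) f (G.rho a b x y w1 w3 m)) = _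
  rw [GD.rho_apply]
  simp only [map_add, fop_Dh, mul_one]
  rfl

end Constr2

set_option linter.unusedSectionVars false

section Functionals

variable {K : Type} [Field K] {H : Type} [Ring H] [HopfAlgebra K H]

lemma exists_dual_gl (g0 : H) : ∃ e : H →ₗ[K] K,
    ∀ g, IsGroupLikeElem K g → e g = if g = g0 then 1 else 0 := by
  have hli := linearIndepOn_isGroupLikeElem (R := K) (A := H)
  rw [LinearIndepOn] at hli
  let B := Module.Basis.span hli
  obtain ⟨e, he⟩ := LinearMap.exists_extend
    (B.constr K (fun g : {a : H | IsGroupLikeElem K a} => if g.1 = g0 then (1 : K) else 0))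
  refine ⟨e, fun g hg => ?_⟩
  have h1 := LinearMap.congr_fun he (B ⟨g, hg⟩)
  rw [Module.Basis.constr_basis] at h1
  rw [← h1]
  simp only [LinearMap.comp_apply, Submodule.subtype_apply, B]
  rw [Module.Basis.span_apply]
  rfl

noncomputable def Tl (f : H →ₗ[K] K) : H →ₗ[K] H :=
  (TensorProduct.lid K H).toLinearMap ∘ₗ LinearMap.rTensor H f ∘ₗ Coalgebra.comul (R := K)
noncomputable def Tr (f : H →ₗ[K] K) : H →ₗ[K] H :=
  (TensorProduct.rid K H).toLinearMap ∘ₗ LinearMap.lTensor H f ∘ₗ Coalgebra.comul (R := K)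

lemma comul_gmul {g s : H} (hg : IsGroupLikeElem K g) :
    Coalgebra.comul (R := K) (g * s) = (g ⊗ₜ[K] g) * Coalgebra.comul (R := K) s := by
  rw [Bialgebra.comul_mul, hg.comul_eq_tmul_self]

lemma counit_skew {x a : H} (ha : IsGroupLikeElem K a)
    (hx : Coalgebra.comul (R := K) x = 1 ⊗ₜ[K] x + x ⊗ₜ[K] a) :
    Coalgebra.counit (R := K) x = 0 := by
  have e := Coalgebra.rTensor_counit_comul (R := K) x
  rw [hx] at e
  simp only [map_add, LinearMap.rTensor_tmul, Bialgebra.counit_one] at e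
  have e2 := congrArg (fun t => Coalgebra.counit (R := K) (TensorProduct.lid K H t)) e
  simpa [ha.counit_eq_one] using e2

lemma claim0 {a b x y : H} (ha : IsGroupLikeElem K a) (hb : IsGroupLikeElem K b) (hne : a ≠ b)
    (hx : Coalgebra.comul (R := K) x = 1 ⊗ₜ[K] x + x ⊗ₜ[K] a)
    (hy : Coalgebra.comul (R := K) y = 1 ⊗ₜ[K] y + y ⊗ₜ[K] b)
    (hxt : x ∉ Submodule.span K {(1 : H) - a}) :
    x ∉ Submodule.span K {g : H | IsGroupLikeElem K g} ⊔ Submodule.span K {y} := by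
  intro hmem
  obtain ⟨z, hz, w, hw, hzw⟩ := Submodule.mem_sup.1 hmem
  obtain ⟨e, rfl⟩ := Submodule.mem_span_singleton.1 hw
  obtain ⟨f, hf⟩ := exists_dual_gl (K := K) a
  have h1 : Tr f z ∈ Submodule.span K {a} := by
    have : Submodule.span K {g : H | IsGroupLikeElem K g} ≤
        (Submodule.span K {a}).comap (Tr f) := by
      rw [Submodule.span_le]
      intro g hg
      have hg' : IsGroupLikeElem K g := hg
      simp only [SetLike.mem_coe, Submodule.mem_comap, Tr, LinearMap.comp_apply,
        hg'.comul_eq_tmul_self, LinearMap.lTensor_tmul, hf g hg', LinearEquiv.coe_coe,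
        TensorProduct.rid_tmul]
      split_ifs with h
      · rw [h, one_smul]; exact Submodule.mem_span_singleton_self _
      · simp
    exact this hz
  have h2 : Tr f z = x + (f x - e * f y) • (1 : H) := by
    have : z = x - e • y := by rw [← hzw]; simp
    rw [this, map_sub, map_smul]
    simp only [Tr, LinearMap.comp_apply, hx, hy, map_add, LinearMap.lTensor_tmul,
      LinearEquiv.coe_coe, TensorProduct.rid_tmul, hf a ha, hf b hb, if_neg hne.symm, if_true]
    module
  obtain ⟨μ, hμ⟩ := Submodule.mem_span_singleton.1 h1
  rw [h2] at hμ
  have h3 := congrArg (Coalgebra.counit (R := K)) hμ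
  simp only [map_smul, map_add, ha.counit_eq_one, counit_skew ha hx, Bialgebra.counit_one,
    smul_eq_mul, mul_one, zero_add] at h3
  rw [← h3] at hμ
  apply hxt
  rw [Submodule.mem_span_singleton]
  refine ⟨-μ, ?_⟩
  rw [smul_sub, neg_smul, neg_smul, hμ]
  module

lemma exists_psi {a b x y : H} (ha : IsGroupLikeElem K a) (hb : IsGroupLikeElem K b) (hne : a ≠ b)
    (hx : Coalgebra.comul (R := K) x = 1 ⊗ₜ[K] x + x ⊗ₜ[K] a)
    (hy : Coalgebra.comul (R := K) y = 1 ⊗ₜ[K] y + y ⊗ₜ[K] b)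
    (hxt : x ∉ Submodule.span K {(1 : H) - a}) (g0 : H) (hg0 : IsGroupLikeElem K g0) :
    ∃ ψ : H →ₗ[K] K, ∀ g, IsGroupLikeElem K g → ψ g = 0 ∧
      ψ (g * x) = (if g = g0 then 1 else 0) ∧ ψ (g * y) = 0 := by
  obtain ⟨χ0, hχ0, hker⟩ := Submodule.exists_le_ker_of_notMem (claim0 ha hb hne hx hy hxt)
  obtain ⟨χ, hχ, hχx⟩ : ∃ χ : H →ₗ[K] K, (Submodule.span K {g : H | IsGroupLikeElem K g} ⊔
      Submodule.span K {y}) ≤ LinearMap.ker χ ∧ χ x = 1 := by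
    refine ⟨(χ0 x)⁻¹ • χ0, ?_, ?_⟩
    · intro z hz
      have := hker hz
      simp only [LinearMap.mem_ker] at this ⊢
      simp [this]
    · simp [hχ0]
  have hχg : ∀ g, IsGroupLikeElem K g → χ g = 0 := fun g hg =>
    hχ (Submodule.mem_sup_left (Submodule.subset_span hg))
  have hχy : χ y = 0 := hχ (Submodule.mem_sup_right (Submodule.mem_span_singleton_self _))
  obtain ⟨e, he⟩ := exists_dual_gl (K := K) g0
  set g' : H := HopfAlgebra.antipode (R := K) g0 with hg'
  have gg' : g' * g0 = 1 := hg0.antipode_mul_cancel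
  have hgl : IsGroupLikeElem K g' := hg0.antipode
  refine ⟨χ ∘ₗ LinearMap.mulLeft K g' ∘ₗ Tl e, fun g hg => ⟨?_, ?_, ?_⟩⟩
  · simp only [Tl, LinearMap.comp_apply, hg.comul_eq_tmul_self, LinearMap.rTensor_tmul,
      LinearEquiv.coe_coe, TensorProduct.lid_tmul, map_smul, LinearMap.mulLeft_apply]
    rw [hχg _ (hgl.mul hg), smul_zero]
  · simp only [Tl, LinearMap.comp_apply, comul_gmul hg, hx, mul_add, map_add,
      Algebra.TensorProduct.tmul_mul_tmul, mul_one, LinearMap.rTensor_tmul,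
      LinearEquiv.coe_coe, TensorProduct.lid_tmul, map_smul, LinearMap.mulLeft_apply]
    rw [hχg _ (hgl.mul (hg.mul ha)), he g hg]
    split_ifs with h
    · rw [h, ← mul_assoc, gg', one_mul, hχx]; simp
    · simp
  · simp only [Tl, LinearMap.comp_apply, comul_gmul hg, hy, mul_add, map_add,
      Algebra.TensorProduct.tmul_mul_tmul, mul_one, LinearMap.rTensor_tmul,
      LinearEquiv.coe_coe, TensorProduct.lid_tmul, map_smul, LinearMap.mulLeft_apply]
    rw [hχg _ (hgl.mul (hg.mul hb)), he g hg]
    split_ifs with h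
    · rw [h, ← mul_assoc, gg', one_mul, hχy]; simp
    · simp

/-- generic second order step -/
lemma Tl_second {f : H →ₗ[K] K} {g w a x u v d : H} {y b : H} {c : K}
    (hg : IsGroupLikeElem K g)
    (hw : Coalgebra.comul (R := K) w = 1 ⊗ₜ[K] w + x ⊗ₜ[K] u + c • (y ⊗ₜ[K] v) + w ⊗ₜ[K] d)
    (h0 : f g = 0) (hy : f (g * y) = 0) :
    Tl f (g * w) = f (g * x) • (g * u) + f (g * w) • (g * d) := by
  simp only [Tl, LinearMap.comp_apply, comul_gmul hg, hw, mul_add, map_add, mul_smul_comm,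
      Algebra.TensorProduct.tmul_mul_tmul, mul_one, LinearMap.rTensor_tmul, h0, hy,
      LinearEquiv.coe_coe, TensorProduct.lid_tmul, map_smul]
  simp

/-- the functionals of order two, and the final functional -/
lemma exists_F {a b x y w1 w3 : H} {c : K}
    (ha : IsGroupLikeElem K a) (hb : IsGroupLikeElem K b) (hne : a ≠ b)
    (hx : Coalgebra.comul (R := K) x = 1 ⊗ₜ[K] x + x ⊗ₜ[K] a)
    (hy : Coalgebra.comul (R := K) y = 1 ⊗ₜ[K] y + y ⊗ₜ[K] b)
    (hxt : x ∉ Submodule.span K {(1 : H) - a})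
    (hyt : y ∉ Submodule.span K {(1 : H) - b})
    (hw1 : Coalgebra.comul (R := K) w1 = 1 ⊗ₜ[K] w1 + x ⊗ₜ[K] (a * x) + w1 ⊗ₜ[K] (a * a))
    (hw3 : Coalgebra.comul (R := K) w3 = 1 ⊗ₜ[K] w3 + x ⊗ₜ[K] (a * y) + c • (y ⊗ₜ[K] (b * x))
      + w3 ⊗ₜ[K] (a * b))
    (S : Finset H) (hS : ∀ g ∈ S, IsGroupLikeElem K g) (f : H →ₗ[K] K) :
    ∃ F : H →ₗ[K] K, ∀ g ∈ S, F g = f g ∧ F (g * x) = f (g * x) ∧ F (g * y) = f (g * y) ∧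
      F (g * w1) = 0 ∧ F (g * w3) = 0 := by
  have key : ∀ g0, IsGroupLikeElem K g0 → ∃ ψ1 ψ3 : H →ₗ[K] K, ∀ g, IsGroupLikeElem K g →
      ψ1 g = 0 ∧ ψ1 (g * x) = 0 ∧ ψ1 (g * y) = 0 ∧
      ψ1 (g * w1) = (if g = g0 then 1 else 0) ∧ ψ1 (g * w3) = 0 ∧
      ψ3 g = 0 ∧ ψ3 (g * x) = 0 ∧ ψ3 (g * y) = 0 ∧
      ψ3 (g * w1) = 0 ∧ ψ3 (g * w3) = (if g = g0 then 1 else 0) := by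
    intro g0 hg0
    obtain ⟨ψ, hψ⟩ := exists_psi ha hb hne hx hy hxt g0 hg0
    obtain ⟨p, hp⟩ := exists_psi ha hb hne hx hy hxt (g0 * a) (hg0.mul ha)
    obtain ⟨q, hq⟩ := exists_psi hb ha hne.symm hy hx hyt (g0 * a) (hg0.mul ha)
    have hw1' : Coalgebra.comul (R := K) w1 = 1 ⊗ₜ[K] w1 + x ⊗ₜ[K] (a * x)
      + (0 : K) • (y ⊗ₜ[K] (b * x)) + w1 ⊗ₜ[K] (a * a) := by rw [hw1]; simp
    have t0 : ∀ g, IsGroupLikeElem K g → Tl ψ g = 0 := by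
      intro g hg
      simp [Tl, hg.comul_eq_tmul_self, (hψ g hg).1]
    have tx : ∀ g, IsGroupLikeElem K g → Tl ψ (g * x) = ψ (g * x) • (g * a) := by
      intro g hg
      simp [Tl, comul_gmul hg, hx, mul_add, (hψ g hg).1]
    have ty : ∀ g, IsGroupLikeElem K g → Tl ψ (g * y) = ψ (g * y) • (g * b) := by
      intro g hg
      simp [Tl, comul_gmul hg, hy, mul_add, (hψ g hg).1]
    have t1 : ∀ g, IsGroupLikeElem K g → Tl ψ (g * w1) =
        ψ (g * x) • (g * a * x) + ψ (g * w1) • (g * (a * a)) := by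
      intro g hg
      rw [Tl_second (b := b) (a := a) hg hw1' (hψ g hg).1 (hψ g hg).2.2, mul_assoc]
    have t3 : ∀ g, IsGroupLikeElem K g → Tl ψ (g * w3) =
        ψ (g * x) • (g * a * y) + ψ (g * w3) • (g * (a * b)) := by
      intro g hg
      rw [Tl_second (b := b) (a := a) hg hw3 (hψ g hg).1 (hψ g hg).2.2, mul_assoc]
    refine ⟨p ∘ₗ Tl ψ, q ∘ₗ Tl ψ, fun g hg => ?_⟩
    simp only [LinearMap.comp_apply, t0 g hg, tx g hg, ty g hg, t1 g hg, t3 g hg, map_zero,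
      map_add, map_smul, (hp _ (hg.mul ha)).1, (hp _ (hg.mul hb)).1, (hp _ (hg.mul (ha.mul ha))).1,
      (hp _ (hg.mul (ha.mul hb))).1, (hq _ (hg.mul ha)).1, (hq _ (hg.mul hb)).1,
      (hq _ (hg.mul (ha.mul ha))).1, (hq _ (hg.mul (ha.mul hb))).1, (hp _ (hg.mul ha)).2.1,
      (hp _ (hg.mul ha)).2.2, (hq _ (hg.mul ha)).2.1, (hq _ (hg.mul ha)).2.2, smul_zero, add_zero,
      true_and, (hψ g hg).2.1]
    by_cases h : g = g0 <;> simp [h]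
  choose! ψ1 ψ3 hψ using key
  refine ⟨f - ∑ g ∈ S, (f (g * w1) • ψ1 g + f (g * w3) • ψ3 g), fun g hg => ?_⟩
  have e : ∀ z, (f - ∑ g ∈ S, (f (g * w1) • ψ1 g + f (g * w3) • ψ3 g)) z =
      f z - ∑ g ∈ S, (f (g * w1) * ψ1 g z + f (g * w3) * ψ3 g z) := by
    intro z
    simp [LinearMap.sub_apply, LinearMap.sum_apply]
  simp only [e]
  have hh := fun g' (hg' : g' ∈ S) => hψ g' (hS g' hg') g (hS g hg)
  refine ⟨?_, ?_, ?_, ?_, ?_⟩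
  · rw [Finset.sum_eq_zero, sub_zero]
    intro g' hg'
    obtain ⟨h1, h2, h3, h4, h5, h6, h7, h8, h9, h10⟩ := hh g' hg'
    rw [h1, h6]; simp
  · rw [Finset.sum_eq_zero, sub_zero]
    intro g' hg'
    obtain ⟨h1, h2, h3, h4, h5, h6, h7, h8, h9, h10⟩ := hh g' hg'
    rw [h2, h7]; simp
  · rw [Finset.sum_eq_zero, sub_zero]
    intro g' hg'
    obtain ⟨h1, h2, h3, h4, h5, h6, h7, h8, h9, h10⟩ := hh g' hg'
    rw [h3, h8]; simp
  · rw [Finset.sum_eq_single g]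
    · obtain ⟨h1, h2, h3, h4, h5, h6, h7, h8, h9, h10⟩ := hh g hg
      rw [h4, h9]; simp
    · intro g' hg' hne'
      obtain ⟨h1, h2, h3, h4, h5, h6, h7, h8, h9, h10⟩ := hh g' hg'
      rw [h4, h9, if_neg hne'.symm]; simp
    · exact fun h => absurd hg h
  · rw [Finset.sum_eq_single g]
    · obtain ⟨h1, h2, h3, h4, h5, h6, h7, h8, h9, h10⟩ := hh g hg
      rw [h5, h10]; simp
    · intro g' hg' hne'
      obtain ⟨h1, h2, h3, h4, h5, h6, h7, h8, h9, h10⟩ := hh g' hg'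
      rw [h5, h10, if_neg hne'.symm]; simp
    · exact fun h => absurd hg h

lemma exists_f1 {a b x y : H}
    (ha : IsGroupLikeElem K a) (hb : IsGroupLikeElem K b) (hne : a ≠ b)
    (hx : Coalgebra.comul (R := K) x = 1 ⊗ₜ[K] x + x ⊗ₜ[K] a)
    (hy : Coalgebra.comul (R := K) y = 1 ⊗ₜ[K] y + y ⊗ₜ[K] b)
    (hxt : x ∉ Submodule.span K {(1 : H) - a})
    (S : Finset H) (hS : ∀ g ∈ S, IsGroupLikeElem K g) :
    ∃ F : H →ₗ[K] K, ∀ g ∈ S, F g = 0 ∧ F (g * x) = 1 ∧ F (g * y) = 0 := by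
  have key := fun g0 (hg0 : IsGroupLikeElem K g0) => exists_psi ha hb hne hx hy hxt g0 hg0
  choose! ψ hψ using key
  refine ⟨∑ g ∈ S, ψ g, fun g hg => ?_⟩
  have hh := fun g' (hg' : g' ∈ S) => hψ g' (hS g' hg') g (hS g hg)
  simp only [LinearMap.sum_apply]
  refine ⟨Finset.sum_eq_zero fun g' hg' => (hh g' hg').1, ?_,
    Finset.sum_eq_zero fun g' hg' => (hh g' hg').2.2⟩
  rw [Finset.sum_eq_single g]
  · rw [(hh g hg).2.1]; simp
  · intro g' hg' hne'
    rw [(hh g' hg').2.1, if_neg hne'.symm]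
  · exact fun h => absurd hg h

end Functionals

set_option linter.unusedSectionVars false

section CaseA
variable {K : Type} [Field K]

def XA (t : K) : (Fin 14 → K) →ₗ[K] (Fin 14 → K) where
  toFun f := ![f 4 - t * f 5, f 7, f 8, f 9, f 10, f 11, f 12, 0, f 13, 0, 0, 0, 0, 0]
  map_add' f g := by
    funext i; fin_cases i <;> simp <;> ring
  map_smul' r f := by
    funext i; fin_cases i <;> simp <;> ring

def YA (c t : K) : (Fin 14 → K) →ₗ[K] (Fin 14 → K) where
  toFun f := ![c * (1 - t) * f 6, c * f 8, f 10, f 11, f 12, f 12, 0, f 13, 0, 0, 0, 0, 0, 0]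
  map_add' f g := by
    funext i; fin_cases i <;> simp <;> ring
  map_smul' r f := by
    funext i; fin_cases i <;> simp <;> ring

lemma XA_apply (t : K) (f) : XA t f =
  ![f 4 - t * f 5, f 7, f 8, f 9, f 10, f 11, f 12, 0, f 13, 0, 0, 0, 0, 0] := rfl
lemma YA_apply (c t : K) (f) : YA c t f =
  ![c * (1 - t) * f 6, c * f 8, f 10, f 11, f 12, f 12, 0, f 13, 0, 0, 0, 0, 0, 0] := rfl

def μA : Fin 14 → ℕ := ![0,3,2,2,1,1,0,4,3,3,2,2,1,4]
def νA : Fin 14 → ℕ := ![2,0,1,1,2,2,3,0,1,1,2,2,3,1]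

def GA (c t : K) : GD K 14 where
  μ := μA
  ν := νA
  X := XA t
  Y := YA c t
  c := c
  homX m j h := by
    rw [XA_apply]
    fin_cases j <;> simp only [Fin.zero_eta, Fin.mk_one, Fin.reduceFinMk] at h ⊢ <;> simp
    · rw [h 4 rfl rfl, h 5 rfl rfl]; ring
    all_goals first | exact h 7 rfl rfl | exact h 8 rfl rfl | exact h 9 rfl rfl | exact h 10 rfl rfl | exact h 11 rfl rfl | exact h 12 rfl rfl | exact h 13 rfl rfl
  homY m j h := by
    rw [YA_apply]
    fin_cases j <;> simp only [Fin.zero_eta, Fin.mk_one, Fin.reduceFinMk] at h ⊢ <;> simp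
    · right; exact h 6 rfl rfl
    · right; exact h 8 rfl rfl
    all_goals first | exact h 7 rfl rfl | exact h 8 rfl rfl | exact h 9 rfl rfl | exact h 10 rfl rfl | exact h 11 rfl rfl | exact h 12 rfl rfl | exact h 13 rfl rfl
  lowX m j h := by
    rw [XA_apply]
    fin_cases j <;> simp only [Fin.zero_eta, Fin.mk_one, Fin.reduceFinMk] at h ⊢ <;> simp
    · rw [h 4 (by decide), h 5 (by decide)]; ring
    all_goals exact h _ (by decide)
  lowY m j h := by
    rw [YA_apply]
    fin_cases j <;> simp only [Fin.zero_eta, Fin.mk_one, Fin.reduceFinMk] at h ⊢ <;> simp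
    · right; exact h 6 (by decide)
    · right; exact h 8 (by decide)
    all_goals exact h _ (by decide)
  rel m := by
    funext i; fin_cases i <;> simp [XA_apply, YA_apply]; ring
  yy m := by
    funext i; fin_cases i <;> simp [XA_apply, YA_apply]
  xxx m := by
    funext i; fin_cases i <;> simp [XA_apply, YA_apply]
  xxy m := by
    funext i; fin_cases i <;> simp [XA_apply, YA_apply]

end CaseA

set_option linter.unusedSectionVars false

section CaseA
variable {K : Type} [Field K]

lemma tri_fix {k : ℕ} (φ : (Fin k → K) →ₗ[K] (Fin k → K))
    (h : ∀ i j, i ≤ j → φ (Pi.single i 1) j = 0) (n : Fin k → K) (hn : φ n = n) : n = 0 := by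
  by_contra h0
  have hex : (Finset.univ.filter fun j => n j ≠ 0).Nonempty := by
    by_contra hc
    rw [Finset.not_nonempty_iff_eq_empty] at hc
    apply h0
    funext j
    by_contra hj
    have : j ∈ Finset.univ.filter fun j => n j ≠ 0 := by simpa using hj
    rw [hc] at this
    simp at this
  obtain ⟨l, hl, hmax⟩ := Finset.exists_max_image _ id hex
  have hl' : n l ≠ 0 := by simpa using hl
  apply hl'
  rw [← hn]
  have h1 : φ n = ∑ i, (n i) • φ (Pi.single i 1) := by
    conv_lhs => rw [← Finset.univ_sum_single n, map_sum]
    refine Finset.sum_congr rfl fun l _ => ?_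
    rw [← map_smul, ← Pi.single_smul]; simp
  rw [h1, Finset.sum_apply]
  refine Finset.sum_eq_zero fun i _ => ?_
  rw [Pi.smul_apply, smul_eq_mul]
  by_cases hi : n i = 0
  · rw [hi, zero_mul]
  · rw [h i l (hmax i (by simpa using hi)), mul_zero]

def eA (i : Fin 14) : Fin 14 → K := Pi.single i 1

lemma relsA (c t : K) :
    (XA t (XA t (eA 13)) = eA 2 ∧ YA c t (eA 10) = eA 2) ∧
    (XA t (eA 9) = eA 3 ∧ YA c t (eA 11) = eA 3) ∧ YA c t (eA 9) = 0 ∧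
    (YA c t (eA 12) = eA 4 + eA 5 ∧ XA t (eA 10) = eA 4 ∧ XA t (eA 11) = eA 5) ∧
    (XA t (XA t (eA 10)) = eA 0 ∧ XA t (XA t (eA 11)) = - t • eA 0) ∧
    XA t (eA 12) = eA 6 ∧ YA c t (eA 13) = eA 7 ∧ XA t (eA 13) = eA 8 ∧ 
    XA t (eA 7) = eA 1 := by
  refine ⟨⟨?_, ?_⟩, ⟨?_, ?_⟩, ?_, ⟨?_, ?_, ?_⟩, ⟨?_, ?_⟩, ?_, ?_, ?_, ?_⟩
  all_goals
    funext i; fin_cases i <;> simp [XA_apply, YA_apply, eA]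

structure IntA (c t t' : K) (φ : (Fin 14 → K) →ₗ[K] (Fin 14 → K)) : Prop where
  hX : ∀ m, φ (XA t m) = XA t' (φ m)
  hY : ∀ m, φ (YA c t m) = YA c t' (φ m)

lemma IntA.core {c t t' : K} {φ} (h : IntA c t t' φ) (hc : c ≠ 0) :
    ∃ α : K, φ (eA 0) = α • eA 0 ∧ α * (t - t') = 0 ∧ (α = 0 →
      ∀ i j, i ≤ j → φ (Pi.single i 1) j = 0) := by
  obtain ⟨⟨a1, a2⟩, ⟨b1, b2⟩, c1, ⟨d1, d2, d3⟩, ⟨e1, e2⟩, f1, f2, f3, f4⟩ := relsA c t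
  have e0 : φ (eA 0) = XA t' (XA t' (φ (eA 10))) := by rw [← e1, h.hX, h.hX]
  have q1 : φ (eA 1) = XA t' (YA c t' (φ (eA 13))) := by rw [← f4, ← f2, h.hX, h.hY]
  have q2 : φ (eA 2) = YA c t' (φ (eA 10)) := by rw [← a2, h.hY]
  have q2' : φ (eA 2) = XA t' (XA t' (φ (eA 13))) := by rw [← a1, h.hX, h.hX]
  have q3 : φ (eA 3) = YA c t' (φ (eA 11)) := by rw [← b2, h.hY]
  have q3' : φ (eA 3) = XA t' (φ (eA 9)) := by rw [← b1, h.hX]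
  have q4 : φ (eA 4) = XA t' (φ (eA 10)) := by rw [← d2, h.hX]
  have q5 : φ (eA 5) = XA t' (φ (eA 11)) := by rw [← d3, h.hX]
  have q6 : φ (eA 6) = XA t' (φ (eA 12)) := by rw [← f1, h.hX]
  have q7 : φ (eA 7) = YA c t' (φ (eA 13)) := by rw [← f2, h.hY]
  have q8 : φ (eA 8) = XA t' (φ (eA 13)) := by rw [← f3, h.hX]
  have R1 : XA t' (XA t' (φ (eA 13))) = YA c t' (φ (eA 10)) := by rw [← q2, q2']
  have R2 : XA t' (φ (eA 9)) = YA c t' (φ (eA 11)) := by rw [← q3, q3']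
  have R3 : YA c t' (φ (eA 9)) = 0 := by rw [← h.hY, c1, map_zero]
  have R4 : YA c t' (φ (eA 12)) = XA t' (φ (eA 10)) + XA t' (φ (eA 11)) := by
    rw [← q4, ← q5, ← h.hY, d1, map_add]
  have R5 : XA t' (XA t' (φ (eA 11))) = - t • XA t' (XA t' (φ (eA 10))) := by
    rw [← e0, ← map_smul, ← e2, h.hX, h.hX]
  have g1 (i) := congrFun R1 i
  have g2 (i) := congrFun R2 i
  have g3 (i) := congrFun R3 i
  have g4 (i) := congrFun R4 i
  have g5 := congrFun R5 0
  clear a1 a2 b1 b2 c1 d1 d2 d3 e1 e2 f1 f2 f3 f4 q2' q3' R1 R2 R3 R4 R5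
  have A1 := g1 1
  have A2 := g1 2
  have A3 := g1 3
  have A4 := g1 4
  have A5 := g1 7
  have B1 := g2 2
  have B2 := g2 3
  have B3 := g2 4
  have B4 := g2 5
  have B5 := g2 6
  have B6 := g2 7
  have B7 := g2 8
  have C1 := g3 1
  have C2 := g3 2
  have C3 := g3 3
  have D1 := g4 4
  have D2 := g4 5
  have D3 := g4 7
  simp only [XA_apply, YA_apply] at A1 A2 A3 A4 A5 B1 B2 B3 B4 B5 B6 B7 C1 C2 C3 D1 D2 D3 g5
  simp at A1 A2 A3 A4 A5 B1 B2 B3 B4 B5 B6 B7 C1 C2 C3 D1 D2 D3 g5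
  simp only [hc, false_or] at A1 C1
  clear g1 g2 g3 g4
  replace A3 := A3.symm
  replace A4 := A4.symm
  replace A5 := A5.symm
  replace B6 := B6.symm
  refine ⟨φ (eA 10) 10, ?_, ?_, ?_⟩
  · rw [e0]
    generalize φ (eA 10) = r at A3 A5 ⊢
    funext i
    fin_cases i <;> simp [XA_apply, eA, A3, A5]
  · rw [A3] at g5
    have : φ (eA 11) 11 = φ (eA 10) 10 := by
      rw [A3, zero_add] at D2; rw [← D2, D1, ← B1, C1, add_zero]
    rw [← B1, C1, this] at g5
    linear_combination g5
  · intro h0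
    have k1 : φ (eA 11) 11 = 0 := by
      rw [A3, zero_add] at D2; rw [← D2, D1, ← B1, C1, add_zero, h0]
    have k2 : φ (eA 12) 12 = 0 := by rw [D1, ← B1, C1, h0, add_zero]
    rw [h0] at A2
    rw [k1] at B2
    rw [C1] at B1
    rw [C2] at B3
    rw [C3] at B4
    clear D1 D2 g5
    change ∀ i j, i ≤ j → φ (eA i) j = 0
    intro i
    fin_cases i <;> simp only [Fin.zero_eta, Fin.mk_one, Fin.reduceFinMk]
    · rw [e0]
      intro j hj; fin_cases j <;> simp [XA_apply, A3, A5, h0]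
    · rw [q1]
      intro j hj; fin_cases j <;> revert hj <;> simp [XA_apply, YA_apply, A2]
    · rw [q2]
      intro j hj; fin_cases j <;> revert hj <;> simp [YA_apply, A3, A4, A5, h0]
    · rw [q3]
      intro j hj; fin_cases j <;> revert hj <;> simp [YA_apply, k1, ← B3, B6]
    · rw [q4]
      intro j hj; fin_cases j <;> revert hj <;> simp [XA_apply, A3, A4, A5, h0]
    · rw [q5]
      intro j hj; fin_cases j <;> revert hj <;> simp [XA_apply, k1, ← B3, B6]
    · rw [q6]
      intro j hj; fin_cases j <;> revert hj <;> simp [XA_apply, k2, D3]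
    · rw [q7]
      intro j hj; fin_cases j <;> revert hj <;> simp [YA_apply, A2]
    · rw [q8]
      intro j hj; fin_cases j <;> revert hj <;> simp [XA_apply, A2]
    · intro j hj; fin_cases j <;> revert hj <;> simp [B2, C2, C3, B5, B7]
    · intro j hj; fin_cases j <;> revert hj <;> simp [h0, A3, A4, A5]
    · intro j hj; fin_cases j <;> revert hj <;> simp [k1, ← B3, B6]
    · intro j hj; fin_cases j <;> revert hj <;> simp [k2, D3]
    · intro j hj; fin_cases j <;> revert hj <;> simp [A2]

lemma IntA.idem {c t : K} {φ} (h : IntA c t t φ) (hc : c ≠ 0) (hid : φ ∘ₗ φ = φ) :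
    φ = 0 ∨ φ = LinearMap.id := by
  have aux : ∀ ψ, IntA c t t ψ → ψ ∘ₗ ψ = ψ → ψ (eA 0) = 0 → ψ = 0 := by
    intro ψ hψ hi h0
    obtain ⟨α, h1, -, h2⟩ := hψ.core hc
    have : α = 0 := by
      rw [h0] at h1
      have := congrFun h1 0
      simpa [eA] using this.symm
    ext1 m
    ext1
    simp only [LinearMap.comp_apply]
    rw [tri_fix ψ (h2 this) (ψ _) (LinearMap.congr_fun hi _)]
    simp
  obtain ⟨α, h1, -, h2⟩ := h.core hc
  have hα : α * α = α := by
    have e := LinearMap.congr_fun hid (eA 0)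
    rw [LinearMap.comp_apply, h1, map_smul, h1] at e
    have := congrFun e 0
    simpa [eA] using this
  rcases (show α = 0 ∨ α = 1 by
      have : α * (α - 1) = 0 := by linear_combination hα
      rcases mul_eq_zero.1 this with h | h
      · exact Or.inl h
      · exact Or.inr (sub_eq_zero.1 h)) with h0 | h0
  · left
    exact aux φ h hid (by rw [h1, h0, zero_smul])
  · right
    have := aux (LinearMap.id - φ) ⟨fun m => by simp [h.hX], fun m => by simp [h.hY]⟩
      (by rw [LinearMap.sub_comp, LinearMap.comp_sub, LinearMap.comp_sub, hid]; simp)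
      (by rw [LinearMap.sub_apply, h1, h0]; simp)
    exact (sub_eq_zero.1 this).symm

lemma IntA.eq {c t t' : K} {φ} (h : IntA c t t' φ) (hc : c ≠ 0) (hinj : Function.Injective φ) :
    t = t' := by
  obtain ⟨α, h1, h2, -⟩ := h.core hc
  rcases mul_eq_zero.1 h2 with h0 | h0
  · exfalso
    rw [h0, zero_smul] at h1
    have := congrFun (hinj (h1.trans (map_zero φ).symm)) 0
    simp [eA] at this
  · exact sub_eq_zero.1 h0
end CaseA

set_option linter.unusedSectionVars false

section CaseAC
variable {K : Type} [Field K] {H : Type} [Ring H] [HopfAlgebra K H]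

lemma discrete_contra (hd : DiscreteCorepType K H) {ι : Type} [Infinite ι] (M : ι → Comod K H)
    (d : H → ℕ) (hind : ∀ i, (M i).Indec K H) (hdim : ∀ i, HasDimVector K H (M i) d)
    (hiso : ∀ i j, ∀ φ : (M i).carrier →ₗ[K] (M j).carrier, Function.Injective φ →
      (∀ f m, φ (fop f (M i) m) = fop f (M j) (φ m)) → i = j) : False := by
  obtain ⟨N, R, hR⟩ := hd d
  choose r hr using fun i => hR (M i) (hind i) (hdim i)
  obtain ⟨i, j, hij, he⟩ := Finite.exists_ne_map_eq_of_infinite r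
  apply hij
  obtain ⟨f, hf⟩ := hr i
  have h2 := hr j
  rw [← he] at h2
  obtain ⟨g, hg⟩ := h2
  let E := LinearEquiv.ofBijective g.toLin hg
  refine hiso i j (E.symm.toLinearMap ∘ₗ f.toLin) ?_ ?_
  · exact E.symm.injective.comp hf.1
  · intro F m
    apply hg.1
    rw [fop_comm]
    have : ∀ z, g.toLin (E.symm z) = z := fun z => E.apply_symm_apply z
    simp only [LinearMap.comp_apply, LinearEquiv.coe_coe]
    rw [this, this, fop_comm]

lemma caseA (hd : DiscreteCorepType K H) [Infinite K] {a b x y w1 w3 : H} {c : K} (hc : c ≠ 0)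
    (ha : IsGroupLikeElem K a) (hb : IsGroupLikeElem K b) (hne : a ≠ b) (hab : a * b = b * a)
    (hx : Coalgebra.comul (R := K) x = 1 ⊗ₜ[K] x + x ⊗ₜ[K] a)
    (hy : Coalgebra.comul (R := K) y = 1 ⊗ₜ[K] y + y ⊗ₜ[K] b)
    (hxt : x ∉ Submodule.span K {(1 : H) - a})
    (hyt : y ∉ Submodule.span K {(1 : H) - b})
    (hw1 : Coalgebra.comul (R := K) w1 = 1 ⊗ₜ[K] w1 + x ⊗ₜ[K] (a * x) + w1 ⊗ₜ[K] (a * a))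
    (hw3 : Coalgebra.comul (R := K) w3 = 1 ⊗ₜ[K] w3 + x ⊗ₜ[K] (a * y) + c • (y ⊗ₜ[K] (b * x))
      + w3 ⊗ₜ[K] (a * b)) : False := by
  have hyp : ∀ t : K, HypH K (GA c t) a b x y w1 w3 := fun t =>
    { ha := glk_iff.2 ha
      hb := glk_iff.2 hb
      hab := hab
      hx := hx
      hy := hy
      hw3 := hw3
      hw1 := Or.inr hw1 }
  let g : Fin 14 → H := fun i => a ^ μA i * b ^ νA i
  let S : Finset H := Finset.univ.image g
  have hS : ∀ s ∈ S, IsGroupLikeElem K s := by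
    intro s hs
    obtain ⟨i, -, rfl⟩ := Finset.mem_image.1 hs
    exact ha.pow.mul hb.pow
  have hmem : ∀ i, g i ∈ S := fun i => Finset.mem_image_of_mem _ (Finset.mem_univ _)
  obtain ⟨f1, hf1⟩ := exists_f1 ha hb hne hx hy hxt S hS
  obtain ⟨f2, hf2⟩ := exists_f1 hb ha hne.symm hy hx hyt S hS
  obtain ⟨F1, hF1⟩ := exists_F ha hb hne hx hy hxt hyt hw1 hw3 S hS f1
  obtain ⟨F2, hF2⟩ := exists_F ha hb hne hx hy hxt hyt hw1 hw3 S hS f2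
  have opX : ∀ (t : K) (m : Fin 14 → K), fop F1 (hyp t).comod m = XA t m := by
    intro t m
    refine ((hyp t).fop F1 m).trans ?_
    funext i
    obtain ⟨p1, p2, p3, p4, p5⟩ := hF1 _ (hmem i)
    obtain ⟨q1, q2, q3⟩ := hf1 _ (hmem i)
    change F1 (g i) * m i + F1 (g i * x) * XA t m i + F1 (g i * y) * _ + F1 (g i * w1) * _ +
      F1 (g i * w3) * _ = _
    rw [p1, p2, p3, p4, p5, q1, q2, q3]
    ring
  have opY : ∀ (t : K) (m : Fin 14 → K), fop F2 (hyp t).comod m = YA c t m := by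
    intro t m
    refine ((hyp t).fop F2 m).trans ?_
    funext i
    obtain ⟨p1, p2, p3, p4, p5⟩ := hF2 _ (hmem i)
    obtain ⟨q1, q2, q3⟩ := hf2 _ (hmem i)
    change F2 (g i) * m i + F2 (g i * x) * XA t m i + F2 (g i * y) * YA c t m i
      + F2 (g i * w1) * _ + F2 (g i * w3) * _ = _
    rw [p1, p2, p3, p4, p5, q1, q2, q3]
    ring
  refine discrete_contra hd (fun t => (hyp t).comod) (fun s => Nat.card {i : Fin 14 // g i = s})
    ?_ (fun t => (hyp t).dimVec) ?_
  · intro t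
    refine ⟨⟨(eA 0 : Fin 14 → K), ?_⟩, ?_⟩
    · intro h0
      have := congrFun (f := (eA 0 : Fin 14 → K)) (g := 0) h0 0
      simp [eA] at this
    · intro f hf
      refine IntA.idem (c := c) (t := t) (φ := f.toLin) ⟨?_, ?_⟩ hc hf
      · intro m
        exact (congrArg f.toLin (opX t m).symm).trans ((fop_comm _ f m).trans (opX t (f.toLin m)))
      · intro m
        exact (congrArg f.toLin (opY t m).symm).trans ((fop_comm _ f m).trans (opY t (f.toLin m)))
  · intro t t' φ hinj hφ
    refine IntA.eq (c := c) (t := t) (φ := φ) ⟨?_, ?_⟩ hc hinj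
    · intro m
      exact (congrArg φ (opX t m).symm).trans ((hφ _ m).trans (opX t' (φ m)))
    · intro m
      exact (congrArg φ (opY t m).symm).trans ((hφ _ m).trans (opY t' (φ m)))

end CaseAC

set_option linter.unusedSectionVars false

section CaseC
variable {K : Type} [Field K]

def XC (k : K) : (Fin 4 → K) →ₗ[K] (Fin 4 → K) where
  toFun f := ![f 1 + k * f 3, 0, f 3, 0]
  map_add' f g := by
    funext i; fin_cases i <;> simp; ring
  map_smul' r f := by
    funext i; fin_cases i <;> simp; ring

def YC (c k : K) : (Fin 4 → K) →ₗ[K] (Fin 4 → K) where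
  toFun f := ![c * f 2 + k * f 3, f 3, 0, 0]
  map_add' f g := by
    funext i; fin_cases i <;> simp; ring
  map_smul' r f := by
    funext i; fin_cases i <;> simp; ring

lemma XC_apply (k : K) (f) : XC k f = ![f 1 + k * f 3, 0, f 3, 0] := rfl
lemma YC_apply (c k : K) (f) : YC c k f = ![c * f 2 + k * f 3, f 3, 0, 0] := rfl

def μC : Fin 4 → ℕ := ![0,1,0,1]
def νC : Fin 4 → ℕ := ![0,0,1,1]

def GC (c : K) : GD K 4 where
  μ := μC
  ν := νC
  X := XC 0
  Y := YC c 0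
  c := c
  homX m j h := by
    rw [XC_apply]
    fin_cases j <;> simp only [Fin.zero_eta, Fin.mk_one, Fin.reduceFinMk] at h ⊢ <;> simp
    · exact h 1 rfl rfl
    · exact h 3 rfl rfl
  homY m j h := by
    rw [YC_apply]
    fin_cases j <;> simp only [Fin.zero_eta, Fin.mk_one, Fin.reduceFinMk] at h ⊢ <;> simp
    · right; exact h 2 rfl rfl
    · exact h 3 rfl rfl
  lowX m j h := by
    rw [XC_apply]
    fin_cases j <;> simp only [Fin.zero_eta, Fin.mk_one, Fin.reduceFinMk] at h ⊢ <;> simp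
    all_goals exact h _ (by decide)
  lowY m j h := by
    rw [YC_apply]
    fin_cases j <;> simp only [Fin.zero_eta, Fin.mk_one, Fin.reduceFinMk] at h ⊢ <;> simp
    · right; exact h 2 (by decide)
    all_goals exact h _ (by decide)
  rel m := by
    funext i; fin_cases i <;> simp [XC_apply, YC_apply]
  yy m := by
    funext i; fin_cases i <;> simp [YC_apply]
  xxx m := by
    funext i; fin_cases i <;> simp [XC_apply]
  xxy m := by
    funext i; fin_cases i <;> simp [XC_apply, YC_apply]

def eC (i : Fin 4) : Fin 4 → K := Pi.single i 1

structure IntC (k l c k' l' c' : K) (φ : (Fin 4 → K) →ₗ[K] (Fin 4 → K)) : Prop where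
  hX : ∀ m, φ (XC k m) = XC k' (φ m)
  hY : ∀ m, φ (YC c l m) = YC c' l' (φ m)

lemma IntC.core {k l c k' l' c' : K} {φ} (h : IntC k l c k' l' c' φ) :
    ∃ α : K, φ (eC 0) = α • eC 0 ∧ α * (c - c') = 0 ∧ (α = 0 →
      ∀ i j, i ≤ j → φ (Pi.single i 1) j = 0) := by
  have a1 : XC k (YC c l (eC 3)) = eC 0 := by
    funext i; fin_cases i <;> simp [XC_apply, YC_apply, eC]
  have a2 : YC c l (XC k (eC 3)) = c • eC 0 := by
    funext i; fin_cases i <;> simp [XC_apply, YC_apply, eC]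
  have a3 : XC k (eC 3) = k • eC 0 + eC 2 := by
    funext i; fin_cases i <;> simp [XC_apply, eC]
  have a4 : YC c l (eC 3) = l • eC 0 + eC 1 := by
    funext i; fin_cases i <;> simp [YC_apply, eC]
  have b0 : φ (eC 0) = (φ (eC 3) 3) • eC 0 := by
    rw [← a1, h.hX, h.hY]
    generalize φ (eC 3) = r
    rw [a1]
    funext i; fin_cases i <;> simp [XC_apply, YC_apply, eC]
  have b1 : c • φ (eC 0) = (c' * φ (eC 3) 3) • eC 0 := by
    rw [← map_smul, ← a2, h.hY, h.hX]
    generalize φ (eC 3) = r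
    funext i; fin_cases i <;> simp [XC_apply, YC_apply, eC]
  refine ⟨_, b0, ?_, ?_⟩
  · rw [b0] at b1
    have := congrFun b1 0
    simp only [eC, Pi.smul_apply, smul_eq_mul, Pi.single_eq_same] at this
    simp only [eC]
    linear_combination this
  · intro h0
    rw [h0, zero_smul] at b0
    have b2 : φ (eC 2) = XC k' (φ (eC 3)) := by rw [← h.hX, a3]; simp [b0]
    have b3 : φ (eC 1) = YC c' l' (φ (eC 3)) := by rw [← h.hY, a4]; simp [b0]
    change ∀ i j, i ≤ j → φ (eC i) j = 0
    intro i
    fin_cases i <;> simp only [Fin.zero_eta, Fin.mk_one, Fin.reduceFinMk]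
    · rw [b0]; simp
    · rw [b3]; intro j hj; fin_cases j <;> revert hj <;> simp [YC_apply, h0]
    · rw [b2]; intro j hj; fin_cases j <;> revert hj <;> simp [XC_apply, h0]
    · intro j hj; fin_cases j <;> revert hj <;> simp [h0]

lemma IntC.idem {k l c : K} {φ} (h : IntC k l c k l c φ) (hid : φ ∘ₗ φ = φ) :
    φ = 0 ∨ φ = LinearMap.id := by
  have aux : ∀ ψ, IntC k l c k l c ψ → ψ ∘ₗ ψ = ψ → ψ (eC 0) = 0 → ψ = 0 := by
    intro ψ hψ hi h0
    obtain ⟨α, h1, -, h2⟩ := hψ.core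
    have : α = 0 := by
      rw [h0] at h1
      have := congrFun h1 0
      simpa [eC] using this.symm
    ext1 m
    ext1
    simp only [LinearMap.comp_apply]
    rw [tri_fix ψ (h2 this) (ψ _) (LinearMap.congr_fun hi _)]
    simp
  obtain ⟨α, h1, -, h2⟩ := h.core
  have hα : α * α = α := by
    have e := LinearMap.congr_fun hid (eC 0)
    rw [LinearMap.comp_apply, h1, map_smul, h1] at e
    have := congrFun e 0
    simpa [eC] using this
  rcases (show α = 0 ∨ α = 1 by
      have : α * (α - 1) = 0 := by linear_combination hα
      rcases mul_eq_zero.1 this with h | h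
      · exact Or.inl h
      · exact Or.inr (sub_eq_zero.1 h)) with h0 | h0
  · left
    exact aux φ h hid (by rw [h1, h0, zero_smul])
  · right
    have := aux (LinearMap.id - φ) ⟨fun m => by simp [h.hX], fun m => by simp [h.hY]⟩
      (by rw [LinearMap.sub_comp, LinearMap.comp_sub, LinearMap.comp_sub, hid]; simp)
      (by rw [LinearMap.sub_apply, h1, h0]; simp)
    exact (sub_eq_zero.1 this).symm

lemma IntC.eq {k l c k' l' c' : K} {φ} (h : IntC k l c k' l' c' φ)
    (hinj : Function.Injective φ) : c = c' := by
  obtain ⟨α, h1, h2, -⟩ := h.core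
  rcases mul_eq_zero.1 h2 with h0 | h0
  · exfalso
    rw [h0, zero_smul] at h1
    have := congrFun (hinj (h1.trans (map_zero φ).symm)) 0
    simp [eC] at this
  · exact sub_eq_zero.1 h0

variable {H : Type} [Ring H] [HopfAlgebra K H]

lemma caseC (hd : DiscreteCorepType K H) [Infinite K] {a b x y : H} (w : K → H)
    (ha : IsGroupLikeElem K a) (hb : IsGroupLikeElem K b) (hne : a ≠ b) (hab : a * b = b * a)
    (hx : Coalgebra.comul (R := K) x = 1 ⊗ₜ[K] x + x ⊗ₜ[K] a)
    (hy : Coalgebra.comul (R := K) y = 1 ⊗ₜ[K] y + y ⊗ₜ[K] b)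
    (hxt : x ∉ Submodule.span K {(1 : H) - a})
    (hyt : y ∉ Submodule.span K {(1 : H) - b})
    (hw3 : ∀ c, Coalgebra.comul (R := K) (w c) = 1 ⊗ₜ[K] (w c) + x ⊗ₜ[K] (a * y)
      + c • (y ⊗ₜ[K] (b * x)) + (w c) ⊗ₜ[K] (a * b)) : False := by
  have hyp : ∀ t : K, HypH K (GC t) a b x y 0 (w t) := fun t =>
    { ha := glk_iff.2 ha
      hb := glk_iff.2 hb
      hab := hab
      hx := hx
      hy := hy
      hw3 := hw3 t
      hw1 := Or.inl ⟨rfl, fun m => by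
        change XC 0 (XC 0 m) = 0
        funext i; fin_cases i <;> simp [XC_apply]⟩ }
  let g : Fin 4 → H := fun i => a ^ μC i * b ^ νC i
  let S : Finset H := Finset.univ.image g
  have hS : ∀ s ∈ S, IsGroupLikeElem K s := by
    intro s hs
    obtain ⟨i, -, rfl⟩ := Finset.mem_image.1 hs
    exact ha.pow.mul hb.pow
  have hmem : ∀ i, g i ∈ S := fun i => Finset.mem_image_of_mem _ (Finset.mem_univ _)
  obtain ⟨F1, hf1⟩ := exists_f1 ha hb hne hx hy hxt S hS
  obtain ⟨F2, hf2⟩ := exists_f1 hb ha hne.symm hy hx hyt S hS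
  have opX : ∀ (t : K) (m : Fin 4 → K), fop F1 (hyp t).comod m = XC (F1 (g 0 * w t)) m := by
    intro t m
    refine ((hyp t).fop F1 m).trans ?_
    funext i
    obtain ⟨q1, q2, q3⟩ := hf1 _ (hmem i)
    change F1 (g i) * m i + F1 (g i * x) * XC 0 m i + F1 (g i * y) * YC t 0 m i
      + F1 (g i * 0) * _ + F1 (g i * w t) * XC 0 (YC t 0 m) i = _
    rw [q1, q2, q3]
    fin_cases i <;> simp [XC_apply, YC_apply]
  have opY : ∀ (t : K) (m : Fin 4 → K), fop F2 (hyp t).comod m = YC t (F2 (g 0 * w t)) m := by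
    intro t m
    refine ((hyp t).fop F2 m).trans ?_
    funext i
    obtain ⟨q1, q2, q3⟩ := hf2 _ (hmem i)
    change F2 (g i) * m i + F2 (g i * x) * XC 0 m i + F2 (g i * y) * YC t 0 m i
      + F2 (g i * 0) * _ + F2 (g i * w t) * XC 0 (YC t 0 m) i = _
    rw [q1, q2, q3]
    fin_cases i <;> simp [XC_apply, YC_apply]
  refine discrete_contra hd (fun t => (hyp t).comod) (fun s => Nat.card {i : Fin 4 // g i = s})
    ?_ (fun t => (hyp t).dimVec) ?_
  · intro t
    refine ⟨⟨(eC 0 : Fin 4 → K), ?_⟩, ?_⟩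
    · intro h0
      have := congrFun (f := (eC 0 : Fin 4 → K)) (g := 0) h0 0
      simp [eC] at this
    · intro f hf
      refine IntC.idem (c := t) (φ := f.toLin) (k := F1 (g 0 * w t)) (l := F2 (g 0 * w t))
        ⟨?_, ?_⟩ hf
      · intro m
        exact (congrArg f.toLin (opX t m).symm).trans ((fop_comm _ f m).trans (opX t (f.toLin m)))
      · intro m
        exact (congrArg f.toLin (opY t m).symm).trans ((fop_comm _ f m).trans (opY t (f.toLin m)))
  · intro t t' φ hinj hφ
    refine IntC.eq (c := t) (φ := φ) (k := F1 (g 0 * w t)) (l := F2 (g 0 * w t))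
      (k' := F1 (g 0 * w t')) (l' := F2 (g 0 * w t')) ⟨?_, ?_⟩ hinj
    · intro m
      exact (congrArg φ (opX t m).symm).trans ((hφ _ m).trans (opX t' (φ m)))
    · intro m
      exact (congrArg φ (opY t m).symm).trans ((hφ _ m).trans (opY t' (φ m)))

end CaseC

set_option linter.unusedSectionVars false

section Main1
variable {K : Type} [Field K] {H : Type} [Ring H] [HopfAlgebra K H]

lemma range_mono {B B' : Submodule K H} (h : B ≤ B') :
    LinearMap.range (TensorProduct.map B.subtype B.subtype) ≤
      LinearMap.range (TensorProduct.map B'.subtype B'.subtype) := by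
  rintro _ ⟨t, rfl⟩
  refine ⟨TensorProduct.map (Submodule.inclusion h) (Submodule.inclusion h) t, ?_⟩
  rw [← LinearMap.comp_apply, ← TensorProduct.map_comp]
  rfl

lemma tmul_mem_range {B : Submodule K H} {p q : H} (hp : p ∈ B) (hq : q ∈ B) :
    p ⊗ₜ[K] q ∈ LinearMap.range (TensorProduct.map B.subtype B.subtype) :=
  ⟨(⟨p, hp⟩ : B) ⊗ₜ[K] (⟨q, hq⟩ : B), by simp⟩

lemma LIC_skew {B : Submodule K H} (hB : IsLIC1 K H B) {a x : H} (haB : a ∈ B)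
    (hx : Coalgebra.comul (R := K) x = 1 ⊗ₜ[K] x + x ⊗ₜ[K] a) : x ∈ B := by
  set B' : Submodule K H := B ⊔ Submodule.span K {x} with hB'
  have hle : B ≤ B' := le_sup_left
  have hxB' : x ∈ B' := Submodule.mem_sup_right (Submodule.mem_span_singleton_self x)
  have hdec : ∀ z ∈ B', ∃ β ∈ B, ∃ r : K, z = β + r • x := by
    intro z hz
    obtain ⟨β, hβ, w, hw, rfl⟩ := Submodule.mem_sup.1 hz
    obtain ⟨r, rfl⟩ := Submodule.mem_span_singleton.1 hw
    exact ⟨β, hβ, r, rfl⟩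
  have hsub : IsSubcoalgebra K H B' := by
    intro z hz
    obtain ⟨β, hβ, r, rfl⟩ := hdec z hz
    rw [map_add, map_smul, hx]
    refine Submodule.add_mem _ (range_mono hle (hB.subcoalg β hβ)) (Submodule.smul_mem _ _
      (Submodule.add_mem _ (tmul_mem_range (hle hB.one_mem) hxB')
        (tmul_mem_range hxB' (hle haB))))
  have hg : ∀ g, IsGrouplike K H g → g ∈ B' → g ∈ B := by
    intro g hg hgB'
    by_contra hgB
    obtain ⟨f, hf, hker⟩ := Submodule.exists_le_ker_of_notMem hgB
    have hker' : ∀ z ∈ B, f z = 0 := fun z hz => hker hz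
    let T : H ⊗[K] H →ₗ[K] K := (TensorProduct.lid K K).toLinearMap ∘ₗ TensorProduct.map f f
    have hT : ∀ p q, T (p ⊗ₜ[K] q) = f p * f q := fun p q => by simp [T]
    have hTB : ∀ z ∈ B, T (Coalgebra.comul (R := K) z) = 0 := by
      intro z hz
      obtain ⟨t, ht⟩ := hB.subcoalg z hz
      rw [← ht]
      clear ht
      induction t using TensorProduct.induction_on with
      | zero => simp
      | tmul p q =>
        rw [TensorProduct.map_tmul, hT]
        simp [hker' p.1 p.2]
      | add p q hp hq =>
        rw [map_add, map_add, hp, hq, add_zero]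
    obtain ⟨β, hβ, r, e⟩ := hdec g hgB'
    have h2 := hT g g
    rw [← hg.2, e, map_add, map_add, hTB β hβ, map_smul, hx, map_smul, map_add, hT, hT,
      hker' _ hB.one_mem, hker' _ haB] at h2
    rw [← e] at h2
    apply hf
    have : f g * f g = 0 := by rw [← h2]; simp
    exact mul_self_eq_zero.1 this
  have hcon : ConnectedOn K H B' := by
    intro g h h1 h2 h3 h4
    refine Relation.ReflTransGen.mono ?_ _ _ (hB.connected g h h1 (hg g h1 h2) h3 (hg h h3 h4))
    rintro p q ⟨z, hz, h5⟩
    exact ⟨z, hle hz, h5⟩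
  rw [← hB.maximal B' hsub hcon hle]
  exact hxB'

lemma exists_skew {B : Submodule K H} (hB : IsLIC1 K H B) {a : H} (haB : a ∈ B)
    (hga : IsGroupLikeElem K a) (harr : arrowsEq K H B 1 a 1)
    (hP : 1 < Module.rank K ↥(skewPrim K H 1 a)) :
    a ≠ 1 ∧ ∃ x, Coalgebra.comul (R := K) x = 1 ⊗ₜ[K] x + x ⊗ₜ[K] a ∧
      x ∉ Submodule.span K {(1 : H) - a} ∧
      ∀ z, Coalgebra.comul (R := K) z = 1 ⊗ₜ[K] z + z ⊗ₜ[K] a →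
        ∃ p q : K, z = p • x + q • (1 - a) := by
  have hinf : skewPrim K H 1 a ⊓ B = skewPrim K H 1 a := by
    rw [inf_eq_left]
    intro x hx
    exact LIC_skew hB haB ((mem_skewPrim K H).1 hx)
  rw [arrowsEq, hinf] at harr
  have hne : a ≠ 1 := by
    intro h
    rw [harr, if_pos h.symm] at hP
    simp at hP
  rw [if_neg hne.symm] at harr
  have hmem : (1 : H) - a ∈ skewPrim K H 1 a := by
    rw [mem_skewPrim, map_sub, hga.comul_eq_tmul_self, Bialgebra.comul_one,
      Algebra.TensorProduct.one_def, TensorProduct.tmul_sub, TensorProduct.sub_tmul]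
    abel
  have hex : ∃ x ∈ skewPrim K H 1 a, x ∉ Submodule.span K {(1 : H) - a} := by
    by_contra hc
    push Not at hc
    have h1 : skewPrim K H 1 a ≤ Submodule.span K {(1 : H) - a} := hc
    have h2 := Submodule.rank_mono h1
    have h3 := rank_span_le (R := K) ({(1 : H) - a} : Set H)
    rw [Cardinal.mk_singleton] at h3
    exact absurd (h2.trans h3) (not_le.2 hP)
  obtain ⟨x, hx, hxt⟩ := hex
  refine ⟨hne, x, (mem_skewPrim K H).1 hx, hxt, ?_⟩
  intro z hz
  have hz' : z ∈ skewPrim K H 1 a := (mem_skewPrim K H).2 hz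
  have hli : LinearIndependent K ![(⟨x, hx⟩ : skewPrim K H 1 a), ⟨1 - a, hmem⟩] := by
    rw [LinearIndependent.pair_iff]
    intro s t hst
    have hst' : s • x + t • (1 - a) = 0 := congrArg Subtype.val hst
    have hs : s = 0 := by
      by_contra hs
      apply hxt
      rw [Submodule.mem_span_singleton]
      refine ⟨-(s⁻¹ * t), ?_⟩
      have : x = s⁻¹ • (s • x) := by rw [smul_smul, inv_mul_cancel₀ hs, one_smul]
      rw [this, eq_neg_of_add_eq_zero_left hst', smul_neg, smul_smul, neg_smul]
    refine ⟨hs, ?_⟩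
    rw [hs, zero_smul, zero_add] at hst'
    rcases smul_eq_zero.1 hst' with h | h
    · exact h
    · exact absurd (sub_eq_zero.1 h).symm hne
  have hfr : Module.finrank K ↥(skewPrim K H 1 a) = 2 := by
    have : Module.rank K ↥(skewPrim K H 1 a) = 2 := by rw [harr]; norm_num
    rw [Module.finrank, this]; simp
  have htop := hli.span_eq_top_of_card_eq_finrank (by rw [hfr]; rfl)
  have : (⟨z, hz'⟩ : skewPrim K H 1 a) ∈ Submodule.span K
    (Set.range ![(⟨x, hx⟩ : skewPrim K H 1 a), ⟨1 - a, hmem⟩]) := by rw [htop]; trivial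
  rw [Matrix.range_cons, Matrix.range_cons, Matrix.range_empty, Set.union_empty,
    Set.singleton_union, Submodule.mem_span_pair] at this
  obtain ⟨p, q, h⟩ := this
  exact ⟨p, q, (congrArg Subtype.val h).symm⟩

end Main1

set_option linter.unusedSectionVars false

section Main2
variable {K : Type} [Field K] {H : Type} [Ring H] [HopfAlgebra K H]

/-- `(1,a)`-skew primitive -/
def SP (K : Type) [Field K] {H : Type} [Ring H] [HopfAlgebra K H] (a x : H) : Prop :=
  Coalgebra.comul (R := K) x = 1 ⊗ₜ[K] x + x ⊗ₜ[K] a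

lemma gl_inv {g g' : H} (hg : IsGroupLikeElem K g) (h1 : g * g' = 1) (h2 : g' * g = 1) :
    Coalgebra.comul (R := K) g' = g' ⊗ₜ[K] g' := by
  have e : Coalgebra.comul (R := K) g * Coalgebra.comul (R := K) g' = 1 := by
    rw [← Bialgebra.comul_mul, h1, Bialgebra.comul_one]
  rw [hg.comul_eq_tmul_self] at e
  have e2 : (g' ⊗ₜ[K] g') * _ = (g' ⊗ₜ[K] g') * _ := congrArg (fun t => (g' ⊗ₜ[K] g') * t) e
  rw [← mul_assoc, Algebra.TensorProduct.tmul_mul_tmul, h2, ← Algebra.TensorProduct.one_def,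
    one_mul, mul_one] at e2
  exact e2

lemma conj_rel {g g' a x : H} (hg : IsGroupLikeElem K g) (h1 : g * g' = 1) (h2 : g' * g = 1)
    (hga : g * a = a * g) (hx : SP K a x)
    (hspan : ∀ z, SP K a z → ∃ p q : K, z = p • x + q • (1 - a)) :
    ∃ p q : K, x * g = p • (g * x) + q • (g - g * a) := by
  have hz : SP K a (g' * x * g) := by
    unfold SP
    rw [Bialgebra.comul_mul, Bialgebra.comul_mul, gl_inv hg h1 h2, hg.comul_eq_tmul_self, hx]
    have e : g' * a * g = a := by rw [mul_assoc, ← hga, ← mul_assoc, h2, one_mul]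
    simp only [mul_add, add_mul, Algebra.TensorProduct.tmul_mul_tmul, mul_one, h2, e]
  obtain ⟨p, q, h⟩ := hspan _ hz
  refine ⟨p, q, ?_⟩
  have this : g * _ = g * _ := congrArg (fun t => g * t) h
  rw [← mul_assoc, ← mul_assoc, h1, one_mul] at this
  rw [this, mul_add, mul_smul_comm, mul_smul_comm, mul_sub, mul_one]

lemma comul_xy {a b x y : H} (hx : SP K a x) (hy : SP K b y) :
    Coalgebra.comul (R := K) (x * y) = 1 ⊗ₜ[K] (x * y) + x ⊗ₜ[K] (a * y) + y ⊗ₜ[K] (x * b)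
      + (x * y) ⊗ₜ[K] (a * b) := by
  rw [Bialgebra.comul_mul, hx, hy]
  simp only [mul_add, add_mul, Algebra.TensorProduct.tmul_mul_tmul, mul_one, one_mul]
  abel

lemma w_rel {a b x y : H} (hx : SP K a x) (hy : SP K b y) (hab : a * b = b * a)
    {s σ r τ : K} (hxb : x * b = s • (b * x) + σ • (b - b * a))
    (hya : y * a = r • (a * y) + τ • (a - a * b)) (α β : K) (w : H)
    (hw : w = α • (x * y) + β • (y * x) - (β * τ) • x - (α * σ) • y) :
    Coalgebra.comul (R := K) w = 1 ⊗ₜ[K] w + (α + β * r) • (x ⊗ₜ[K] (a * y))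
      + (α * s + β) • (y ⊗ₜ[K] (b * x)) + w ⊗ₜ[K] (a * b) := by
  have hx' : Coalgebra.comul (R := K) x = _ := hx
  have hy' : Coalgebra.comul (R := K) y = _ := hy
  rw [hw]
  simp only [map_add, map_sub, map_smul, comul_xy hx hy, comul_xy hy hx, hx', hy', hxb, hya, ← hab]
  simp only [tmul_add, tmul_sub, add_tmul, sub_tmul, tmul_smul, ← smul_tmul', smul_add, smul_sub,
    smul_smul]
  module

lemma w1_rel {a x : H} (hx : SP K a x) {q n : K} (hxa : x * a = q • (a * x) + n • (a - a * a))
    (hq : 1 + q ≠ 0) (w : H) (hw : w = (1 + q)⁻¹ • (x * x - n • x)) :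
    Coalgebra.comul (R := K) w = 1 ⊗ₜ[K] w + x ⊗ₜ[K] (a * x) + w ⊗ₜ[K] (a * a) := by
  have hx' : Coalgebra.comul (R := K) x = _ := hx
  have : Coalgebra.comul (R := K) (x * x - n • x) = 1 ⊗ₜ[K] (x * x - n • x)
      + (1 + q) • (x ⊗ₜ[K] (a * x)) + (x * x - n • x) ⊗ₜ[K] (a * a) := by
    simp only [map_sub, map_smul, comul_xy hx hx, hx', hxa]
    simp only [tmul_add, tmul_sub, sub_tmul, tmul_smul, ← smul_tmul', smul_add, smul_sub]
    module
  rw [hw, map_smul, this, smul_add, smul_add, smul_smul, inv_mul_cancel₀ hq, one_smul,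
    tmul_smul, ← smul_tmul']

lemma normalise (hchar : (2 : K) ≠ 0) {a b x a' b' : H} (ha : IsGroupLikeElem K a)
    (hab : a * b = b * a) (ha' : a' * a = 1) (hb' : b' * b = 1) (ha1 : a ≠ 1) (hx : SP K a x)
    (hxt : x ∉ Submodule.span K {(1 : H) - a}) {n s σ : K}
    (hxa : x * a = (-1 : K) • (a * x) + n • (a - a * a))
    (hxb : x * b = s • (b * x) + σ • (b - b * a)) :
    ∃ x1, SP K a x1 ∧ x1 ∉ Submodule.span K {(1 : H) - a} ∧ a * x1 + x1 * a = 0 ∧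
      x1 * b = s • (b * x1) := by
  obtain ⟨k, hk⟩ : ∃ k : K, n = - (2 * k) := ⟨- n / 2, by field_simp⟩
  set x1 := x + k • (1 - a) with hx1
  have e1 : a * x1 + x1 * a = 0 := by
    rw [hx1, add_mul, hxa, mul_add, mul_smul_comm, smul_mul_assoc, mul_sub, sub_mul, mul_one,
      one_mul, hk]
    module
  have e2 : x1 * b = s • (b * x1) + (σ + k - s * k) • (b - b * a) := by
    rw [hx1, add_mul, hxb, mul_add, mul_smul_comm, smul_mul_assoc, mul_sub, sub_mul, mul_one,
      one_mul, hab]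
    module
  have e1' : x1 * a = - (a * x1) := by rw [eq_neg_iff_add_eq_zero, add_comm]; exact e1
  have hσ : σ + k - s * k = 0 := by
    set ρ := σ + k - s * k with hρ
    have c1 : x1 * (a * b) = - (s • (a * b * x1)) - ρ • (a * b - a * b * a) := by
      rw [← mul_assoc, e1', neg_mul, mul_assoc, e2]
      simp only [mul_add, mul_smul_comm, mul_sub, mul_assoc]
      abel
    have c2 : x1 * (a * b) = - (s • (a * b * x1)) + ρ • (a * b - a * b * a) := by
      rw [hab, ← mul_assoc, e2, add_mul, smul_mul_assoc, mul_assoc, e1', smul_mul_assoc, sub_mul,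
        mul_neg, smul_neg, mul_assoc b a x1]
    have c3 : (2 * ρ) • (a * b - a * b * a) = 0 := by
      have := c1.symm.trans c2
      have h3 : ρ • (a * b - a * b * a) + ρ • (a * b - a * b * a) = 0 := by
        rw [sub_eq_add_neg] at this
        have h4 := add_left_cancel this
        nth_rewrite 1 [← h4]
        abel
      rw [two_mul, add_smul, h3]
    rcases smul_eq_zero.1 c3 with h | h
    · exact (mul_eq_zero.1 h).resolve_left hchar
    · exfalso
      apply ha1
      have h5 := congrArg (fun t => b' * (a' * t)) h
      simp only [mul_zero] at h5
      rw [mul_sub, mul_assoc a b a, ← mul_assoc a' a, ← mul_assoc a' a, ha', one_mul, one_mul,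
        mul_sub, ← mul_assoc, hb', one_mul] at h5
      exact (sub_eq_zero.1 h5).symm
  refine ⟨x1, ?_, ?_, e1, ?_⟩
  · unfold SP
    have hx' : Coalgebra.comul (R := K) x = _ := hx
    rw [hx1, map_add, map_smul, map_sub, hx', Bialgebra.comul_one, ha.comul_eq_tmul_self,
      Algebra.TensorProduct.one_def]
    simp only [tmul_add, tmul_sub, add_tmul, sub_tmul, tmul_smul, ← smul_tmul']
    module
  · intro h
    apply hxt
    have := Submodule.sub_mem _ h (Submodule.smul_mem _ k
      (Submodule.mem_span_singleton_self (R := K) ((1 : H) - a)))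
    rwa [hx1, add_sub_cancel_right] at this
  · rw [e2, hσ, zero_smul, add_zero]

end Main2

set_option linter.unusedSectionVars false

theorem choice_of_skew_primitives
    (K : Type) [Field K] [IsAlgClosed K] (hchar : (2 : K) ≠ 0)
    (H : Type) [Ring H] [HopfAlgebra K H]
    (hpointed : IsPointedCoalgebra K H) (hdiscrete : DiscreteCorepType K H)
    (B : Submodule K H) (hB : IsLIC1 K H B)
    (a b : H) (hab : a ≠ b) (m n : ℤ) (hgrid : GridQuiverOn K H B a b m n)
    (hPa : 1 < Module.rank K ↥(skewPrim K H 1 a))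
    (hPb : 1 < Module.rank K ↥(skewPrim K H 1 b)) :
    ∃ (x y : H) (lam : K), lam ≠ 0 ∧
      x ∈ skewPrim K H 1 a ∧ x ∉ Submodule.span K {(1 : H) - a} ∧
      y ∈ skewPrim K H 1 b ∧ y ∉ Submodule.span K {(1 : H) - b} ∧
      a * x + x * a = 0 ∧ b * y + y * b = 0 ∧
      b * x + lam⁻¹ • (x * b) = 0 ∧ a * y + lam • (y * a) = 0 ∧
      x ^ 2 ∈ skewPrim K H 1 (a ^ 2) ∧ y ^ 2 ∈ skewPrim K H 1 (b ^ 2) ∧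
      x * y + lam • (y * x) ∈ skewPrim K H 1 (a * b) := by
  obtain ⟨⟨hga, haB⟩, ⟨hgb, hbB⟩, hcomm, ha1, ha2, hb1, hb2, -, -, harr⟩ := hgrid
  have hone : IsGrouplike K H 1 := glk_iff.2 IsGroupLikeElem.one
  have haa := harr 1 a ⟨hone, hB.one_mem⟩ ⟨hga, haB⟩
  have hbb := harr 1 b ⟨hone, hB.one_mem⟩ ⟨hgb, hbB⟩
  rw [if_pos (Or.inl (one_mul a).symm)] at haa
  rw [if_pos (Or.inr (one_mul b).symm)] at hbb
  have ga := glk_iff.1 hga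
  have gb := glk_iff.1 hgb
  obtain ⟨ane, x, hx, hxt, hxs⟩ := exists_skew hB haB ga haa hPa
  obtain ⟨bne, y, hy, hyt, hys⟩ := exists_skew hB hbB gb hbb hPb
  haveI : Infinite K := IsAlgClosed.instInfinite
  obtain ⟨q1, n1, hxa⟩ := conj_rel ga ha1 ha2 rfl hx hxs
  obtain ⟨s, σ, hxb⟩ := conj_rel gb hb1 hb2 hcomm.symm hx hxs
  obtain ⟨r, τ, hya⟩ := conj_rel ga ha1 ha2 hcomm hy hys
  obtain ⟨q2, n2, hyb⟩ := conj_rel gb hb1 hb2 rfl hy hys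
  have hsr : s * r = 1 := by
    by_contra hsr
    have hd' : 1 - s * r ≠ 0 := fun h => hsr (sub_eq_zero.1 h).symm
    refine caseC hdiscrete (fun c => (1 - (c - s) / (1 - s * r) * r) • (x * y)
      + ((c - s) / (1 - s * r)) • (y * x) - (((c - s) / (1 - s * r)) * τ) • x
      - ((1 - (c - s) / (1 - s * r) * r) * σ) • y) ga gb hab hcomm hx hy hxt hyt ?_
    intro c
    have h := w_rel hx hy hcomm hxb hya (1 - (c - s) / (1 - s * r) * r)
      ((c - s) / (1 - s * r)) _ rfl
    have e1 : (1 - (c - s) / (1 - s * r) * r) + (c - s) / (1 - s * r) * r = 1 := by ring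
    have e2 : (1 - (c - s) / (1 - s * r) * r) * s + (c - s) / (1 - s * r) = c := by
      field_simp; ring
    rw [e1, e2, one_smul] at h
    exact h
  have hs : s ≠ 0 := left_ne_zero_of_mul_eq_one hsr
  have hw3 := w_rel hx hy hcomm hxb hya 1 0 _ rfl
  generalize (1 : K) • (x * y) + (0 : K) • (y * x) - ((0 : K) * τ) • x - ((1 : K) * σ) • y = w3
    at hw3
  rw [zero_mul, add_zero, one_smul, one_mul, add_zero] at hw3
  have hq1 : q1 = -1 := by
    by_contra hq
    have hq' : 1 + q1 ≠ 0 := fun h => hq (eq_neg_of_add_eq_zero_right h)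
    exact caseA hdiscrete hs ga gb hab hcomm hx hy hxt hyt (w1_rel hx hxa hq' _ rfl) hw3
  have hq2 : q2 = -1 := by
    by_contra hq
    have hq' : 1 + q2 ≠ 0 := fun h => hq (eq_neg_of_add_eq_zero_right h)
    refine caseA hdiscrete (inv_ne_zero hs) gb ga hab.symm hcomm.symm hy hx hyt hxt
      (w1_rel hy hyb hq' _ rfl) (w3 := s⁻¹ • w3) ?_
    rw [map_smul, hw3, smul_add, smul_add, smul_add, smul_smul, inv_mul_cancel₀ hs, one_smul,
      tmul_smul, ← smul_tmul', ← hcomm]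
    abel
  rw [hq1] at hxa
  rw [hq2] at hyb
  obtain ⟨x1, hx1, hx1t, hxa1, hxb1⟩ := normalise hchar ga hcomm ha2 hb2 ane hx hxt hxa hxb
  obtain ⟨y1, hy1, hy1t, hyb1, hya1⟩ := normalise hchar gb hcomm.symm hb2 ha2 bne hy hyt hyb hya
  refine ⟨x1, y1, -s, neg_ne_zero.2 hs, (mem_skewPrim K H).2 hx1, hx1t, (mem_skewPrim K H).2 hy1,
    hy1t, hxa1, hyb1, ?_, ?_, ?_, ?_, ?_⟩
  · rw [hxb1, smul_smul, inv_neg, neg_mul, inv_mul_cancel₀ hs, neg_one_smul, add_neg_cancel]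
  · rw [hya1, smul_smul, neg_mul, hsr, neg_one_smul, add_neg_cancel]
  · rw [mem_skewPrim, sq, sq, comul_xy hx1 hx1, add_assoc (1 ⊗ₜ[K] (x1 * x1)), ← tmul_add, hxa1,
      tmul_zero, add_zero]
  · rw [mem_skewPrim, sq, sq, comul_xy hy1 hy1, add_assoc (1 ⊗ₜ[K] (y1 * y1)), ← tmul_add, hyb1,
      tmul_zero, add_zero]
  · have hr : r = s⁻¹ := eq_inv_of_mul_eq_one_right hsr
    rw [mem_skewPrim, map_add, map_smul, comul_xy hx1 hy1, comul_xy hy1 hx1, hxb1, hya1, ← hcomm]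
    simp only [tmul_add, add_tmul, tmul_smul, ← smul_tmul', smul_add, smul_smul, neg_mul, hsr]
    module
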